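/- For all β,γ ∈ ℝ with β²+γ² > 0 there exist c_{γ,β} > 0, M > 0 and ε₀ > 0 such that for any 0 < ε ≤ ε₀ there exist Ψ_ε ∈ H²(S²) and a function F_ε : ℝ → ℝ with ΔΨ_ε − 4γY₁⁰ = F_ε(Ψ_ε), ‖βY₂⁰ + γY₁⁰ − Ψ_ε‖_{H²} ≤ Mε, and |⟨Ψ_ε,Y₆²⟩ + β²·(1/36)·(45/(11π√182))·c_{γ,β}·ε²| ≤ Mε³ and |⟨Ψ_ε,Y₄²⟩ + (1/14)·((3√3/(154π))(11γ² − 5β²) − β²·(1/(7π))·(30γ²/(7γ²+15β²)))·c_{γ,β}·ε²| ≤ Mε³. -/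

import Mathlib

open MeasureTheory
open scoped ENNReal

noncomputable section

/-- Functions on the unit sphere, represented in colatitude-longitude coordinates `(θ, φ)`. -/
abbrev SphereFun : Type := ℝ → ℝ → ℝ

/-- The `L²` inner product on the sphere:
`⟨u,v⟩ = ∫₀^{2π} ∫₀^π u v sin θ dθ dφ`. -/
def sInner (u v : SphereFun) : ℝ :=
  ∫ φ in (0:ℝ)..(2*Real.pi), ∫ θ in (0:ℝ)..Real.pi, u θ φ * v θ φ * Real.sin θ

/-- Legendre polynomials via Rodrigues' formula. -/
def legP (n : ℕ) (s : ℝ) : ℝ :=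
  (1 / ((2:ℝ)^n * (Nat.factorial n : ℝ))) * iteratedDeriv n (fun x : ℝ => (x^2 - 1)^n) s

/-- Associated Legendre functions `P_n^m`. -/
def assocLegP (n m : ℕ) (s : ℝ) : ℝ :=
  (-1 : ℝ)^m * (1 - s^2) ^ ((m : ℝ)/2) * iteratedDeriv m (legP n) s

/-- Real spherical harmonics `Y_n^m`. -/
def Ynm (n : ℕ) (m : ℤ) : SphereFun := fun θ φ =>
  if m = 0 then
    Real.sqrt ((2*(n:ℝ)+1)/(4*Real.pi)) * legP n (Real.cos θ)
  else if 0 < m then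
    (-1 : ℝ)^(m.natAbs) * Real.sqrt 2 *
      Real.sqrt ((2*(n:ℝ)+1)/(4*Real.pi) *
        ((Nat.factorial (n - m.natAbs) : ℝ) / (Nat.factorial (n + m.natAbs) : ℝ))) *
      assocLegP n m.natAbs (Real.cos θ) * Real.cos ((m.natAbs : ℝ) * φ)
  else
    (-1 : ℝ)^(m.natAbs) * Real.sqrt 2 *
      Real.sqrt ((2*(n:ℝ)+1)/(4*Real.pi) *
        ((Nat.factorial (n - m.natAbs) : ℝ) / (Nat.factorial (n + m.natAbs) : ℝ))) *
      assocLegP n m.natAbs (Real.cos θ) * Real.sin ((m.natAbs : ℝ) * φ)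

/-- The spherical-harmonic coefficient `u_n^m = ⟨u, Y_n^m⟩`. -/
def coeff (u : SphereFun) (n : ℕ) (m : ℤ) : ℝ := sInner u (Ynm n m)

/-- `μ_n = n(n+1) + 1`. -/
def muSp (n : ℕ) : ℝ := (n:ℝ)*((n:ℝ)+1)+1

/-- Squared (inhomogeneous) Sobolev norm `‖u‖²_{H^k} = Σ μ_n^k |u_n^m|²`. -/
def sobNormSq (k : ℕ) (u : SphereFun) : ℝ≥0∞ :=
  ∑' p : ℕ × ℤ, if |p.2| ≤ (p.1 : ℤ) then
    ENNReal.ofReal ((muSp p.1)^k * (coeff u p.1 p.2)^2) else 0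

/-- Squared homogeneous Sobolev norm `‖u‖²_{Ḣ^k} = Σ_{n ≥ 1} λ_n^k |u_n^m|²`. -/
def dotNormSq (k : ℕ) (u : SphereFun) : ℝ≥0∞ :=
  ∑' p : ℕ × ℤ, if 1 ≤ p.1 ∧ |p.2| ≤ (p.1 : ℤ) then
    ENNReal.ofReal (((p.1:ℝ)*((p.1:ℝ)+1))^k * (coeff u p.1 p.2)^2) else 0

/-- Squared Gevrey norm `‖u‖²_{G_λ} = Σ_{n ≥ 1} μ_n² e^{2λ√μ_n} |u_n^m|²`. -/
def gevNormSq (lam : ℝ) (u : SphereFun) : ℝ≥0∞ :=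
  ∑' p : ℕ × ℤ, if 1 ≤ p.1 ∧ |p.2| ≤ (p.1 : ℤ) then
    ENNReal.ofReal ((muSp p.1)^2 * Real.exp (2*lam*Real.sqrt (muSp p.1)) *
      (coeff u p.1 p.2)^2) else 0

/-- `∂_θ`. -/
def dTheta (u : SphereFun) : SphereFun := fun θ φ => deriv (fun t => u t φ) θ

/-- `∂_φ`. -/
def dPhi (u : SphereFun) : SphereFun := fun θ φ => deriv (fun p => u θ p) φ

/-- The Laplace–Beltrami operator in colatitude-longitude coordinates:
`Δu = (1/sinθ)∂_θ(sinθ ∂_θu) + (1/sin²θ)∂²_φu`. -/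
def lapS (u : SphereFun) : SphereFun := fun θ φ =>
  (1 / Real.sin θ) * deriv (fun t => Real.sin t * dTheta u t φ) θ
  + (1 / (Real.sin θ)^2) * dPhi (dPhi u) θ φ

/-- A zonal function: one depending only on the colatitude `θ`. -/
def Zonal (u : SphereFun) : Prop := ∀ (θ φ₁ φ₂ : ℝ), u θ φ₁ = u θ φ₂

/-- Zonal on the coordinate chart `θ ∈ [0, π]`. -/
def ZonalOn (u : SphereFun) : Prop :=
  ∀ θ ∈ Set.Icc (0:ℝ) Real.pi, ∀ (φ₁ φ₂ : ℝ), u θ φ₁ = u θ φ₂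

/-- `2π`-periodicity in the longitude. -/
def PeriodicPhi (u : SphereFun) : Prop := ∀ θ φ, u θ (φ + 2*Real.pi) = u θ φ

/-- The advection term `U·∇f` for the velocity `U = ∇⊥Ψ`, i.e.
`(1/sinθ)∂_φΨ ∂_θf − ∂_θΨ (1/sinθ)∂_φf`. -/
def advect (Ψ f : SphereFun) : SphereFun := fun θ φ =>
  (1 / Real.sin θ) * dPhi Ψ θ φ * dTheta f θ φ
  - dTheta Ψ θ φ * ((1 / Real.sin θ) * dPhi f θ φ)

/-- Smoothness in the coordinates. -/
def SphSmooth (u : SphereFun) : Prop := ContDiff ℝ (⊤ : ℕ∞) (Function.uncurry u)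

/-- A function is trivial if it is a zonal function plus an element of
`span{Y₂^m : |m| ≤ 2}`; non-triviality is the negation of this. -/
def SphNontrivial (u : SphereFun) : Prop :=
  ¬ ∃ (z : SphereFun) (c : ℤ → ℝ), Zonal z ∧
      ∀ θ ∈ Set.Icc (0:ℝ) Real.pi, ∀ φ : ℝ,
        u θ φ = z θ φ + ∑ m ∈ Finset.Icc (-2 : ℤ) 2, c m * Ynm 2 m θ φ

/-- Real analyticity on the sphere, characterized by membership in a Gevrey class. -/
def RealAnalyticSphere (u : SphereFun) : Prop := ∃ lam > 0, gevNormSq lam u < ⊤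

/-!
Near the state `g z + h (3 z² - 1)`, where `z = cos θ`, the solution is sought in the form
`Ψ = g z + h (3 z² - 1) + ε (u + w)` with `u = sin² θ cos 2φ`, so that `u` lies in the kernel of
`Δ + 6`. For a nonlinearity `F(s) = -6 s + ε G(s + h)` the equation becomes
`(Δ + 6) w = G(g z + 3 h z² + ε (u + w))`. Expanding in powers of `z` and `u` and rescaling
`u ↦ ε u` turns `Δ + 6` into a perturbation, of relative size `ε²`, of an operator that is
diagonal up to a triangular part. Its two resonances (the kernel modes `z² - 1/3` and `u`) are
removed by a Lyapunov–Schmidt argument: two coefficients of the polynomial `G` are the parameters,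
and the implicit function theorem in a weighted `ℓ¹` algebra yields `w`.

At `ε = 0` the remaining freedom in `G` prescribes the `u`-linear part of `w`, which is what `Y₄²`
and `Y₆²` see at order `ε²`: by self-adjointness of the Gegenbauer operator, whose eigenvalues on
these modes are `6 - n (n + 1) = -14` and `-36`, the coefficients are weighted moments of `G`.
-/

/-- The Banach space `ℓ¹(ι)` of absolutely summable real families. -/
abbrev EllOne (ι : Type*) : Type _ := lp (fun _ : ι => ℝ) 1

namespace EllOne

section Lift

variable {ι Y : Type*} [NormedAddCommGroup Y] [NormedSpace ℝ Y] {C : ℝ} {y : ι → Y}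

lemma summable_abs (a : EllOne ι) : Summable (fun i => |a i|) := by
  simpa using (lp.memℓp a).summable (by simp)

lemma norm_eq_tsum_abs (a : EllOne ι) : ‖a‖ = ∑' i, |a i| := by
  simpa using lp.norm_eq_tsum_rpow (p := 1) (by simp) a

lemma norm_smul_le_of_bounded (h : ∀ i, ‖y i‖ ≤ C) (a : EllOne ι) (i : ι) :
    ‖a i • y i‖ ≤ C * |a i| := by
  rw [norm_smul, Real.norm_eq_abs, mul_comm]
  gcongr
  exact h i

lemma norm_tsum_smul_le (h : ∀ i, ‖y i‖ ≤ C) (a : EllOne ι) : ‖∑' i, a i • y i‖ ≤ C * ‖a‖ := by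
  rw [norm_eq_tsum_abs, ← tsum_mul_left]
  exact tsum_of_norm_bounded ((summable_abs a).mul_left C).hasSum (norm_smul_le_of_bounded h a)

lemma summable_smul_of_bounded [CompleteSpace Y] (h : ∀ i, ‖y i‖ ≤ C) (a : EllOne ι) :
    Summable (fun i => a i • y i) :=
  .of_norm_bounded ((summable_abs a).mul_left C) (norm_smul_le_of_bounded h a)

/-- The universal property of `ℓ¹(ι)`: the continuous linear map that sends the unit vectors to
a given bounded family. -/
def lift [CompleteSpace Y] (y : ι → Y) (h : ∀ i, ‖y i‖ ≤ C) : EllOne ι →L[ℝ] Y :=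
  LinearMap.mkContinuous
    { toFun := fun a => ∑' i, a i • y i
      map_add' := fun a b => by
        simp only [lp.coeFn_add, Pi.add_apply, add_smul]
        exact (summable_smul_of_bounded h a).tsum_add (summable_smul_of_bounded h b)
      map_smul' := fun c a => by
        simp only [lp.coeFn_smul, Pi.smul_apply, smul_assoc, RingHom.id_apply]
        exact (summable_smul_of_bounded h a).tsum_const_smul c }
    C (norm_tsum_smul_le h)

lemma norm_lift_le [CompleteSpace Y] (h : ∀ i, ‖y i‖ ≤ C) (hC : 0 ≤ C) : ‖lift y h‖ ≤ C :=
  LinearMap.mkContinuous_norm_le _ hC _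

end Lift

section Basis

variable {ι : Type*} [DecidableEq ι] {Y : Type*} [NormedAddCommGroup Y] [NormedSpace ℝ Y]

/-- The unit vector of `ℓ¹(ι)` at `i`. -/
def basisVec (i : ι) : EllOne ι := lp.single 1 i (1 : ℝ)

lemma norm_basisVec (i : ι) : ‖basisVec i‖ = 1 := by
  rw [basisVec, lp.norm_single (by norm_num), norm_one]

@[simp]
lemma lift_basisVec [CompleteSpace Y] {C : ℝ} {y : ι → Y} (h : ∀ i, ‖y i‖ ≤ C) (i : ι) :
    lift y h (basisVec i) = y i := by
  change ∑' j, basisVec i j • y j = y i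
  rw [tsum_eq_single i]
  · rw [basisVec, lp.single_apply_self, one_smul]
  · intro j hj
    rw [basisVec, lp.single_apply_ne _ _ _ hj, zero_smul]

lemma hasSum_clm (f : EllOne ι →L[ℝ] Y) (a : EllOne ι) :
    HasSum (fun i => a i • f (basisVec i)) (f a) := by
  have h := (lp.hasSum_single (p := 1) (by simp) a).mapL f
  convert h using 2 with i
  rw [← map_smul, basisVec, ← lp.single_smul, smul_eq_mul, mul_one]

lemma norm_clm_apply_le {f : EllOne ι →L[ℝ] Y} {C : ℝ} (h : ∀ i, ‖f (basisVec i)‖ ≤ C)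
    (a : EllOne ι) : ‖f a‖ ≤ C * ‖a‖ :=
  (hasSum_clm f a).tsum_eq ▸ norm_tsum_smul_le h a

lemma clm_ext {f g : EllOne ι →L[ℝ] Y} (h : ∀ i, f (basisVec i) = g (basisVec i)) : f = g := by
  ext a
  refine (hasSum_clm f a).unique ?_
  simpa only [h] using hasSum_clm g a

lemma clm₂_ext {f g : EllOne ι →L[ℝ] EllOne ι →L[ℝ] Y}
    (h : ∀ i j, f (basisVec i) (basisVec j) = g (basisVec i) (basisVec j)) : f = g :=
  clm_ext fun i => clm_ext (h i)

end Basis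

section Convolution

variable {ι : Type*} [DecidableEq ι] [AddCommMonoid ι]

/-- The convolution product of `ℓ¹(ι)`: the bilinear extension of the addition of indices. -/
def conv : EllOne ι →L[ℝ] EllOne ι →L[ℝ] EllOne ι :=
  lift (fun i => lift (fun j => basisVec (i + j)) fun j => (norm_basisVec (i + j)).le)
    fun _ => norm_lift_le _ zero_le_one

@[simp]
lemma conv_basisVec (i j : ι) : conv (basisVec i) (basisVec j) = basisVec (i + j) := by
  simp only [conv, lift_basisVec]

lemma clm_conv {Y : Type*} [NormedAddCommGroup Y] [NormedSpace ℝ Y] {f : EllOne ι →L[ℝ] Y}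
    {B : EllOne ι →L[ℝ] EllOne ι →L[ℝ] Y}
    (h : ∀ i j, f (basisVec (i + j)) = B (basisVec i) (basisVec j)) (a b : EllOne ι) :
    f (conv a b) = B a b := by
  have : (ContinuousLinearMap.compL ℝ _ _ _ f).comp conv = B :=
    clm₂_ext fun i j => by simp [h]
  rw [← this]
  rfl

/-- A multiplicative functional on the convolution algebra, described on the unit vectors. -/
structure IsCharacter (χ : EllOne ι →L[ℝ] ℝ) : Prop where
  basisVec_zero : χ (basisVec 0) = 1
  basisVec_add (i j : ι) : χ (basisVec (i + j)) = χ (basisVec i) * χ (basisVec j)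

/-- A point derivation of the convolution algebra at `χ`, described on the unit vectors. -/
structure IsPointDerivation (χ δ : EllOne ι →L[ℝ] ℝ) : Prop where
  basisVec_zero : δ (basisVec 0) = 0
  basisVec_add (i j : ι) : δ (basisVec (i + j)) =
    χ (basisVec i) * δ (basisVec j) + δ (basisVec i) * χ (basisVec j)

/-- A unital endomorphism of the convolution algebra, described on the unit vectors. -/
structure IsEndomorphism (S : EllOne ι →L[ℝ] EllOne ι) : Prop where
  basisVec_zero : S (basisVec 0) = basisVec 0
  basisVec_add (i j : ι) : S (basisVec (i + j)) = conv (S (basisVec i)) (S (basisVec j))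

lemma IsCharacter.map_conv {χ : EllOne ι →L[ℝ] ℝ} (hχ : IsCharacter χ) (a b : EllOne ι) :
    χ (conv a b) = χ a * χ b :=
  clm_conv (B := (ContinuousLinearMap.mul ℝ ℝ).bilinearComp χ χ) hχ.basisVec_add a b

lemma IsPointDerivation.map_conv {χ δ : EllOne ι →L[ℝ] ℝ} (hδ : IsPointDerivation χ δ)
    (a b : EllOne ι) : δ (conv a b) = χ a * δ b + δ a * χ b :=
  clm_conv (B := (ContinuousLinearMap.mul ℝ ℝ).bilinearComp χ δ +
    (ContinuousLinearMap.mul ℝ ℝ).bilinearComp δ χ) hδ.basisVec_add a b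

lemma IsEndomorphism.map_conv {S : EllOne ι →L[ℝ] EllOne ι} (hS : IsEndomorphism S)
    (a b : EllOne ι) : S (conv a b) = conv (S a) (S b) :=
  clm_conv (B := conv.bilinearComp S S) hS.basisVec_add a b

open Polynomial

/-- The value `p(a)` of a polynomial in the convolution algebra `ℓ¹(ι)`. -/
def polyEval (p : ℝ[X]) (a : EllOne ι) : EllOne ι := aeval (conv a) p (basisVec 0)

lemma polyEval_add (p q : ℝ[X]) (a : EllOne ι) :
    polyEval (p + q) a = polyEval p a + polyEval q a := by
  simp only [polyEval, map_add, add_apply]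

lemma polyEval_smul (r : ℝ) (p : ℝ[X]) (a : EllOne ι) :
    polyEval (r • p) a = r • polyEval p a := by
  simp only [polyEval, map_smul, smul_apply]

lemma polyEval_C (r : ℝ) (a : EllOne ι) : polyEval (C r) a = r • basisVec 0 := by
  simp only [polyEval, aeval_C, Algebra.algebraMap_eq_smul_one, smul_apply,
    one_apply_eq_self]

lemma polyEval_X_mul (p : ℝ[X]) (a : EllOne ι) :
    polyEval (X * p) a = conv a (polyEval p a) := by
  simp only [polyEval, map_mul, aeval_X, mul_apply_eq_comp]

lemma contDiff_polyEval (p : ℝ[X]) : ContDiff ℝ ⊤ (polyEval p : EllOne ι → EllOne ι) := by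
  unfold polyEval
  simp only [aeval_eq_sum_range]
  fun_prop

lemma polyInduction {P : ℝ[X] → Prop} (hC : ∀ r, P (C r)) (hadd : ∀ p q, P p → P q → P (p + q))
    (hX : ∀ p, P p → P (X * p)) (p : ℝ[X]) : P p := by
  refine Polynomial.induction_on p hC hadd fun n r h => ?_
  rw [pow_succ', mul_left_comm]
  exact hX _ h

lemma IsCharacter.map_polyEval {χ : EllOne ι →L[ℝ] ℝ} (hχ : IsCharacter χ) (p : ℝ[X])
    (a : EllOne ι) : χ (polyEval p a) = p.eval (χ a) := by
  induction p using polyInduction with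
  | hC r => rw [polyEval_C, map_smul, hχ.basisVec_zero, eval_C, smul_eq_mul, mul_one]
  | hadd p q hp hq => rw [polyEval_add, map_add, hp, hq, eval_add]
  | hX p hp => rw [polyEval_X_mul, hχ.map_conv, hp, eval_mul, eval_X]

lemma IsPointDerivation.map_polyEval {χ δ : EllOne ι →L[ℝ] ℝ} (hδ : IsPointDerivation χ δ)
    (hχ : IsCharacter χ) (p : ℝ[X]) (a : EllOne ι) :
    δ (polyEval p a) = (derivative p).eval (χ a) * δ a := by
  induction p using polyInduction with
  | hC r =>
    rw [polyEval_C, map_smul, hδ.basisVec_zero, derivative_C, eval_zero, smul_zero, zero_mul]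
  | hadd p q hp hq => rw [polyEval_add, map_add, hp, hq, derivative_add, eval_add, add_mul]
  | hX p hp =>
    rw [polyEval_X_mul, hδ.map_conv, hp, hχ.map_polyEval, derivative_mul, derivative_X, one_mul,
      eval_add, eval_mul, eval_X]
    ring

lemma IsEndomorphism.map_polyEval {S : EllOne ι →L[ℝ] EllOne ι} (hS : IsEndomorphism S)
    (p : ℝ[X]) (a : EllOne ι) : S (polyEval p a) = polyEval p (S a) := by
  induction p using polyInduction with
  | hC r => rw [polyEval_C, polyEval_C, map_smul, hS.basisVec_zero]
  | hadd p q hp hq => rw [polyEval_add, polyEval_add, map_add, hp, hq]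
  | hX p hp => rw [polyEval_X_mul, polyEval_X_mul, hS.map_conv, hp]

end Convolution

end EllOne

section GeometricSeries

variable {X : Type*} [NormedAddCommGroup X] [NormedSpace ℝ X] [CompleteSpace X]
  {L : X →L[ℝ] X}

lemma isUnit_one_sub_smul (hL : ‖L‖ ≤ 1) {s : ℝ} (hs : |s| < 1) : IsUnit (1 - s • L) := by
  refine isUnit_one_sub_of_norm_lt_one ?_
  rw [norm_smul, Real.norm_eq_abs]
  exact (mul_le_of_le_one_right (abs_nonneg s) hL).trans_lt hs

lemma inverse_one_sub_smul_apply (hL : ‖L‖ ≤ 1) {s : ℝ} (hs : |s| < 1) (x : X) :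
    Ring.inverse (1 - s • L) x = x + s • Ring.inverse (1 - s • L) (L x) := by
  have h := congr($(Ring.inverse_mul_cancel _ (isUnit_one_sub_smul hL hs)) x)
  simp only [mul_apply_eq_comp, sub_apply, one_apply_eq_self, smul_apply, map_sub, map_smul] at h
  exact sub_eq_iff_eq_add.mp h

lemma contDiff_inverse_one_sub_smul {E : Type*} [NormedAddCommGroup E] [NormedSpace ℝ E]
    {n : WithTop ℕ∞} (hL : ‖L‖ ≤ 1) {s : E → ℝ} (hs : ContDiff ℝ n s) (hs₁ : ∀ p, |s p| < 1) :
    ContDiff ℝ n (fun p => Ring.inverse (1 - s p • L)) := by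
  refine contDiff_iff_contDiffAt.mpr fun p => ?_
  obtain ⟨w, hw⟩ := isUnit_one_sub_smul hL (hs₁ p)
  refine ContDiffAt.comp (g := Ring.inverse) p ?_
    (contDiff_const.sub (hs.smul contDiff_const)).contDiffAt
  exact hw ▸ contDiffAt_ringInverse ℝ w

end GeometricSeries

namespace RossbyHaurwitz

open EllOne

/-- Arrays `(a_{jk})` of `ℓ¹(ℕ × ℕ)`, read as the power series `∑ a_{jk} s^j t^k`. -/
abbrev PowerSeriesAlg : Type := EllOne (ℕ × ℕ)

/-- The backward shift `e_{j+1,k} ↦ e_{j,k}`, `e_{0,k} ↦ 0`. -/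
def shiftFst : PowerSeriesAlg →L[ℝ] PowerSeriesAlg :=
  lift (C := 1) (fun i => if i.1 = 0 then 0 else basisVec (i.1 - 1, i.2)) fun i => by
    split_ifs <;> simp [norm_basisVec]

/-- The backward shift `e_{j,k+1} ↦ e_{j,k}`, `e_{j,0} ↦ 0`. -/
def shiftSnd : PowerSeriesAlg →L[ℝ] PowerSeriesAlg :=
  lift (C := 1) (fun i => if i.2 = 0 then 0 else basisVec (i.1, i.2 - 1)) fun i => by
    split_ifs <;> simp [norm_basisVec]

/-- The coordinate functional `a ↦ a_i`. -/
def coord (i : ℕ × ℕ) : PowerSeriesAlg →L[ℝ] ℝ :=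
  lift (C := 1) (fun j => if j = i then 1 else 0) fun j => by split_ifs <;> simp

/-- Evaluation of a power series at `(s, t)`, for `|s| < 1` and `|t| < 1`. Writing it through the
resolvents of the two shifts makes its smoothness in `(s, t)` for the operator norm evident. -/
def evalAt (s t : ℝ) : PowerSeriesAlg →L[ℝ] ℝ :=
  (coord (0, 0)).comp
    ((Ring.inverse (1 - t • shiftSnd)).comp (Ring.inverse (1 - s • shiftFst)))

lemma norm_shiftFst_le : ‖shiftFst‖ ≤ 1 := norm_lift_le _ zero_le_one

lemma norm_shiftSnd_le : ‖shiftSnd‖ ≤ 1 := norm_lift_le _ zero_le_one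

lemma coord_basisVec (i j : ℕ × ℕ) : coord i (basisVec j) = if j = i then 1 else 0 := by
  rw [coord, lift_basisVec]

lemma coord_comp_inverse_shiftSnd {t : ℝ} (ht : |t| < 1) (j k : ℕ) :
    coord (0, 0) (Ring.inverse (1 - t • shiftSnd) (basisVec (j, k))) =
      if j = 0 then t ^ k else 0 := by
  induction k with
  | zero =>
    rw [inverse_one_sub_smul_apply norm_shiftSnd_le ht]
    simp [coord_basisVec, shiftSnd]
  | succ k ih =>
    have hshift : shiftSnd (basisVec (j, k + 1)) = basisVec (j, k) := by simp [shiftSnd]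
    rw [inverse_one_sub_smul_apply norm_shiftSnd_le ht, hshift, map_add, map_smul, ih,
      coord_basisVec, if_neg (by simp), zero_add, pow_succ', smul_eq_mul, mul_ite, mul_zero]

lemma evalAt_basisVec {s t : ℝ} (hs : |s| < 1) (ht : |t| < 1) (j k : ℕ) :
    evalAt s t (basisVec (j, k)) = s ^ j * t ^ k := by
  simp only [evalAt, ContinuousLinearMap.comp_apply]
  induction j with
  | zero =>
    rw [inverse_one_sub_smul_apply norm_shiftFst_le hs]
    simp [shiftFst, coord_comp_inverse_shiftSnd ht]
  | succ j ih =>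
    have hshift : shiftFst (basisVec (j + 1, k)) = basisVec (j, k) := by simp [shiftFst]
    rw [inverse_one_sub_smul_apply norm_shiftFst_le hs, hshift, map_add, map_add,
      coord_comp_inverse_shiftSnd ht, if_neg j.succ_ne_zero, zero_add, map_smul, map_smul, ih,
      pow_succ', smul_eq_mul, mul_assoc]

lemma contDiff_evalAt {E : Type*} [NormedAddCommGroup E] [NormedSpace ℝ E] {n : WithTop ℕ∞}
    {s t : E → ℝ} (hs : ContDiff ℝ n s) (ht : ContDiff ℝ n t) (hs₁ : ∀ p, |s p| < 1)
    (ht₁ : ∀ p, |t p| < 1) : ContDiff ℝ n (fun p => evalAt (s p) (t p)) :=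
  contDiff_const.clm_comp ((contDiff_inverse_one_sub_smul norm_shiftSnd_le ht ht₁).clm_comp
    (contDiff_inverse_one_sub_smul norm_shiftFst_le hs hs₁))

lemma isCharacter_evalAt {s t : ℝ} (hs : |s| < 1) (ht : |t| < 1) :
    IsCharacter (evalAt s t) where
  basisVec_zero := by rw [Prod.zero_eq_mk, evalAt_basisVec hs ht, pow_zero, pow_zero, one_mul]
  basisVec_add := by
    rintro ⟨j, k⟩ ⟨j', k'⟩
    simp only [Prod.mk_add_mk, evalAt_basisVec hs ht]
    ring

end RossbyHaurwitz

section Laplacian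

open Real

lemma contDiff_lapS {E : Type*} [NormedAddCommGroup E] [NormedSpace ℝ E]
    {ℓ : ℝ → ℝ → E →L[ℝ] ℝ} (hℓ : ContDiff ℝ (⊤ : ℕ∞) (Function.uncurry ℓ)) (θ φ : ℝ) :
    ∃ Λ : E →L[ℝ] ℝ, ∀ a, lapS (fun θ φ => ℓ θ φ a) θ φ = Λ a := by
  have deriv_apply {f : ℝ → E →L[ℝ] ℝ} (hf : ContDiff ℝ (⊤ : ℕ∞) f) (a : E) :
      deriv (fun t => f t a) = fun t => deriv f t a := by
    ext t
    simpa using ((hf.differentiable (by simp) t).hasDerivAt.clm_apply (hasDerivAt_const t a)).deriv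
  have deriv_smooth {f : ℝ → E →L[ℝ] ℝ} (hf : ContDiff ℝ (⊤ : ℕ∞) f) :
      ContDiff ℝ (⊤ : ℕ∞) (deriv f) := (contDiff_infty_iff_deriv.mp hf).2
  have hθ : ContDiff ℝ (⊤ : ℕ∞) (fun t => ℓ t φ) := hℓ.comp (by fun_prop : ContDiff ℝ _ (·, φ))
  have hφ : ContDiff ℝ (⊤ : ℕ∞) (fun t => ℓ θ t) := hℓ.comp (by fun_prop : ContDiff ℝ _ (θ, ·))
  refine ⟨(1 / sin θ) • deriv (fun t => sin t • deriv (fun t => ℓ t φ) t) θ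
    + (1 / sin θ ^ 2) • deriv (deriv (fun t => ℓ θ t)) φ, fun a => ?_⟩
  have houter : deriv (fun t => sin t * deriv (fun t => ℓ t φ) t a) θ =
      deriv (fun t => sin t • deriv (fun t => ℓ t φ) t) θ a :=
    congr_fun (deriv_apply (contDiff_sin.smul (deriv_smooth hθ)) a) θ
  simp only [lapS, dTheta, dPhi, deriv_apply hθ, deriv_apply hφ, deriv_apply (deriv_smooth hφ),
    houter, add_apply, smul_apply, smul_eq_mul]

lemma lapS_separated (T P : ℝ → ℝ) (θ φ : ℝ) :
    lapS (fun θ φ => T θ * P φ) θ φ =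
      1 / sin θ * deriv (fun t => sin t * deriv T t) θ * P φ
        + T θ / sin θ ^ 2 * deriv (deriv P) φ := by
  simp only [lapS, dTheta, dPhi, deriv_mul_const_field, deriv_const_mul_field, ← mul_assoc]
  ring

lemma deriv_deriv_cos_two_mul_pow (k : ℕ) (φ : ℝ) :
    deriv (deriv fun p => cos (2 * p) ^ k) φ =
      4 * (k * (k - 1)) * cos (2 * φ) ^ (k - 2) - 4 * k ^ 2 * cos (2 * φ) ^ k := by
  have hcos (p : ℝ) : HasDerivAt (fun p => cos (2 * p)) (-(2 * sin (2 * p))) p := by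
    simpa [mul_comm] using ((hasDerivAt_id p).const_mul 2).cos
  have hsin (p : ℝ) : HasDerivAt (fun p => sin (2 * p)) (2 * cos (2 * p)) p := by
    simpa [mul_comm] using ((hasDerivAt_id p).const_mul 2).sin
  have hfirst : (deriv fun p => cos (2 * p) ^ k) =
      fun p => k * cos (2 * p) ^ (k - 1) * -(2 * sin (2 * p)) :=
    funext fun p => ((hcos p).pow k).deriv
  have hsecond := ((((hcos φ).pow (k - 1)).const_mul (k : ℝ)).mul
    ((hsin φ).const_mul 2).fun_neg).deriv
  rw [hfirst]
  refine hsecond.trans ?_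
  have hpyth := sin_sq_add_cos_sq (2 * φ)
  rcases k with _ | _ | k
  · simp
  · norm_num
    ring
  · simp only [Pi.pow_apply, add_tsub_cancel_right, Nat.reduceSubDiff, Nat.cast_add, Nat.cast_one]
    linear_combination (4 * (k + 2) * (k + 1) * cos (2 * φ) ^ k : ℝ) * hpyth

lemma legendre_cos_pow_mul_sin_pow (j m : ℕ) {θ : ℝ} (hθ : sin θ ≠ 0) :
    1 / sin θ * deriv (fun t => sin t * deriv (fun t => cos t ^ j * sin t ^ m) t) θ =
      j * (j - 1) * cos θ ^ (j - 2) * sin θ ^ m - (j + m) * (j + m + 1) * (cos θ ^ j * sin θ ^ m)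
        + m ^ 2 * (cos θ ^ j * sin θ ^ m) / sin θ ^ 2 := by
  have hflux : (fun t => sin t * deriv (fun t => cos t ^ j * sin t ^ m) t) =
      fun t => m * (cos t ^ (j + 1) * sin t ^ m) - j * (cos t ^ (j - 1) * sin t ^ (m + 2)) := by
    ext t
    rw [(((hasDerivAt_cos t).fun_pow j).fun_mul ((hasDerivAt_sin t).fun_pow m)).deriv]
    rcases m with _ | m <;> simp <;> ring
  have hderiv := (((((hasDerivAt_cos θ).fun_pow (j + 1)).fun_mul
    ((hasDerivAt_sin θ).fun_pow m)).const_mul (m : ℝ)).fun_sub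
      ((((hasDerivAt_cos θ).fun_pow (j - 1)).fun_mul
        ((hasDerivAt_sin θ).fun_pow (m + 2))).const_mul (j : ℝ))).deriv
  have hm : m * sin θ ^ (m - 1) = m * sin θ ^ m / sin θ := by
    rcases m with _ | m
    · simp
    · field_simp
      simp [pow_succ]
  have hpyth := sin_sq_add_cos_sq θ
  rw [hflux, hderiv]
  push_cast
  rw [hm]
  rcases j with _ | _ | j
  · norm_num
    field_simp
    linear_combination (m ^ 2 : ℝ) * hpyth
  · norm_num
    field_simp
    linear_combination (m ^ 2 * cos θ * sin θ ^ m : ℝ) * hpyth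
  · simp only [Nat.cast_add, Nat.cast_one, Nat.add_sub_cancel, Nat.reduceSubDiff]
    field_simp
    linear_combination ((m ^ 2 * cos θ ^ 2 + (j + 2) * (j + 1) * sin θ ^ 2) *
      cos θ ^ j * sin θ ^ m : ℝ) * hpyth

end Laplacian

namespace RossbyHaurwitz

open EllOne Real

/-- The spherical harmonic `sin²θ cos 2φ = x² − y²` of degree two. -/
def saddle (θ φ : ℝ) : ℝ := sin θ ^ 2 * cos (2 * φ)

lemma abs_saddle_le (θ φ : ℝ) : |saddle θ φ| ≤ 1 := by
  rw [saddle, abs_mul, abs_pow]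
  exact mul_le_one₀ (pow_le_one₀ (abs_nonneg _) (abs_sin_le_one θ)) (abs_nonneg _)
    (abs_cos_le_one _)

lemma saddle_add_two_pi (θ φ : ℝ) : saddle θ (φ + 2 * π) = saddle θ φ := by
  rw [saddle, saddle, show 2 * (φ + 2 * π) = 2 * φ + (2 : ℕ) * (2 * π) by push_cast; ring,
    cos_add_nat_mul_two_pi]

lemma lapS_cos_pow_mul_saddle_pow (j k : ℕ) {θ : ℝ} (hθ : sin θ ≠ 0) (φ : ℝ) :
    lapS (fun θ φ => cos θ ^ j * saddle θ φ ^ k) θ φ =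
      j * (j - 1) * (cos θ ^ (j - 2) * saddle θ φ ^ k)
        + 4 * (k * (k - 1)) * ((cos θ ^ j - cos θ ^ (j + 2)) * saddle θ φ ^ (k - 2))
        - (j + 2 * k) * (j + 2 * k + 1) * (cos θ ^ j * saddle θ φ ^ k) := by
  have hseparated : (fun θ φ => cos θ ^ j * saddle θ φ ^ k) =
      fun θ φ => cos θ ^ j * sin θ ^ (2 * k) * cos (2 * φ) ^ k := by
    ext θ φ
    rw [saddle, mul_pow, ← pow_mul, mul_assoc]
  have hpyth := sin_sq_add_cos_sq θ
  rw [hseparated, lapS_separated (fun t => cos t ^ j * sin t ^ (2 * k)) (fun p => cos (2 * p) ^ k),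
    legendre_cos_pow_mul_sin_pow j (2 * k) hθ, deriv_deriv_cos_two_mul_pow]
  rcases k with _ | _ | k
  · simp [saddle]
  · simp [saddle]
    field_simp
    ring
  · simp only [saddle]
    push_cast
    field_simp
    linear_combination (4 * (k + 1) * (k + 2) * sin θ ^ (2 * k + 2) * cos θ ^ j *
      cos (2 * φ) ^ k : ℝ) * hpyth

/-- Evaluation of the series `∑ a_{jk} (z/8)^j (u/64)^k` at the point `(θ, φ)` of the sphere,
where `z = cos θ` and `u = sin²θ cos 2φ`. The radius `8` is what the growth of the spherical
harmonics requires, see `abs_coeff_toSphere_le`. -/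
def sphEval (θ φ : ℝ) : PowerSeriesAlg →L[ℝ] ℝ := evalAt (cos θ / 8) (saddle θ φ / 64)

/-- The function on the sphere represented by an array of coefficients. -/
def toSphere (a : PowerSeriesAlg) : SphereFun := fun θ φ => sphEval θ φ a

/-- The array that represents `z^j u^k`. -/
def monomial (j k : ℕ) : PowerSeriesAlg := (8 : ℝ) ^ (j + 2 * k) • basisVec (j, k)

lemma abs_cos_div_lt (θ : ℝ) : |cos θ / 8| < 1 := by
  rw [abs_div, div_lt_one (by norm_num)]
  exact (abs_cos_le_one θ).trans_lt (by norm_num)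

lemma abs_saddle_div_lt (θ φ : ℝ) : |saddle θ φ / 64| < 1 := by
  rw [abs_div, div_lt_one (by norm_num)]
  exact (abs_saddle_le θ φ).trans_lt (by norm_num)

lemma isCharacter_sphEval (θ φ : ℝ) : IsCharacter (sphEval θ φ) :=
  isCharacter_evalAt (abs_cos_div_lt θ) (abs_saddle_div_lt θ φ)

lemma contDiff_sphEval : ContDiff ℝ (⊤ : ℕ∞) (Function.uncurry sphEval) :=
  contDiff_evalAt (s := fun p : ℝ × ℝ => cos p.1 / 8) (t := fun p => saddle p.1 p.2 / 64)
    (by fun_prop) (by unfold saddle; fun_prop) (fun p => abs_cos_div_lt p.1)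
    (fun p => abs_saddle_div_lt p.1 p.2)

lemma sphEval_basisVec (θ φ : ℝ) (j k : ℕ) :
    sphEval θ φ (basisVec (j, k)) = (8⁻¹ : ℝ) ^ (j + 2 * k) * (cos θ ^ j * saddle θ φ ^ k) := by
  rw [sphEval, evalAt_basisVec (abs_cos_div_lt θ) (abs_saddle_div_lt θ φ), pow_add, pow_mul,
    show (8⁻¹ : ℝ) ^ 2 = 64⁻¹ by norm_num]
  ring

lemma basisVec_eq_smul_monomial (j k : ℕ) :
    basisVec (j, k) = (8⁻¹ : ℝ) ^ (j + 2 * k) • monomial j k := by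
  rw [monomial, smul_smul, ← mul_pow, inv_mul_cancel₀ (by norm_num), one_pow, one_smul]

lemma toSphere_monomial (j k : ℕ) :
    toSphere (monomial j k) = fun θ φ => cos θ ^ j * saddle θ φ ^ k := by
  ext θ φ
  rw [toSphere, monomial, map_smul, sphEval_basisVec, smul_eq_mul, ← mul_assoc, ← mul_pow,
    mul_inv_cancel₀ (by norm_num), one_pow, one_mul]

lemma sphSmooth_toSphere (a : PowerSeriesAlg) : SphSmooth (toSphere a) :=
  contDiff_sphEval.clm_apply contDiff_const

lemma periodicPhi_toSphere (a : PowerSeriesAlg) : PeriodicPhi (toSphere a) := fun θ φ => by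
  simp only [toSphere, sphEval, saddle_add_two_pi]

/-- The Laplacian at a point as a continuous linear functional of the coefficients. -/
def lapEval (θ φ : ℝ) : PowerSeriesAlg →L[ℝ] ℝ :=
  (contDiff_lapS contDiff_sphEval θ φ).choose

lemma lapS_toSphere (a : PowerSeriesAlg) (θ φ : ℝ) :
    lapS (toSphere a) θ φ = lapEval θ φ a :=
  (contDiff_lapS contDiff_sphEval θ φ).choose_spec a

lemma lapEval_monomial (j k : ℕ) {θ : ℝ} (hθ : sin θ ≠ 0) (φ : ℝ) :
    lapEval θ φ (monomial j k) =
      j * (j - 1) * (cos θ ^ (j - 2) * saddle θ φ ^ k)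
        + 4 * (k * (k - 1)) * ((cos θ ^ j - cos θ ^ (j + 2)) * saddle θ φ ^ (k - 2))
        - (j + 2 * k) * (j + 2 * k + 1) * (cos θ ^ j * saddle θ φ ^ k) := by
  rw [← lapS_toSphere, toSphere_monomial, lapS_cos_pow_mul_saddle_pow j k hθ]

lemma inv_eight_pow_sub_two (j n : ℕ) :
    (j * (j - 1) / 64 * 8⁻¹ ^ (j - 2 + n) : ℝ) = j * (j - 1) * 8⁻¹ ^ (j + n) := by
  rcases j with _ | _ | j
  · simp
  · simp
  · rw [show j + 1 + 1 - 2 = j by omega]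
    ring

lemma lapEval_basisVec (j k : ℕ) {θ : ℝ} (hθ : sin θ ≠ 0) (φ : ℝ) :
    lapEval θ φ (basisVec (j, k)) =
      j * (j - 1) / 64 * sphEval θ φ (basisVec (j - 2, k))
        + 4 * (k * (k - 1)) * (1 / 4096 * sphEval θ φ (basisVec (j, k - 2))
            - 1 / 64 * sphEval θ φ (basisVec (j + 2, k - 2)))
        - (j + 2 * k) * (j + 2 * k + 1) * sphEval θ φ (basisVec (j, k)) := by
  have hu : (k * (k - 1) / 4096 * 8⁻¹ ^ (j + 2 * (k - 2)) : ℝ) =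
      k * (k - 1) * 8⁻¹ ^ (j + 2 * k) := by
    rcases k with _ | _ | k
    · simp
    · simp
    · rw [show k + 1 + 1 - 2 = k by omega]
      ring
  rw [basisVec_eq_smul_monomial, map_smul, lapEval_monomial j k hθ, smul_eq_mul]
  simp only [← basisVec_eq_smul_monomial, sphEval_basisVec]
  linear_combination (-cos θ ^ (j - 2) * saddle θ φ ^ k) * inv_eight_pow_sub_two j (2 * k) -
    4 * (cos θ ^ j - cos θ ^ (j + 2)) * saddle θ φ ^ (k - 2) * hu

/-- The diagonal part of `Δ + 6` on `z^j u^k`, with `1` in place of the zero that occurs in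
degree `j + 2k = 2`. -/
def diagEntry (i : ℕ × ℕ) : ℝ :=
  if i.1 + 2 * i.2 = 2 then 1 else 6 - (i.1 + 2 * i.2) * (i.1 + 2 * i.2 + 1)

lemma cast_mul_sub_one_nonneg (n : ℕ) : (0 : ℝ) ≤ n * (n - 1) := by
  rcases n with _ | n
  · simp
  · push_cast
    rw [add_sub_cancel_right]
    positivity

lemma diagEntry_bounds (j k : ℕ) :
    1 ≤ |diagEntry (j, k)| ∧ |(j * (j - 1) : ℝ)| ≤ 2 * |diagEntry (j, k)| ∧
      |4 * (k * (k - 1) : ℝ)| ≤ |diagEntry (j, k)| := by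
  rw [abs_of_nonneg (cast_mul_sub_one_nonneg j),
    abs_of_nonneg (mul_nonneg (by norm_num) (cast_mul_sub_one_nonneg k))]
  rcases le_or_gt (j + 2 * k) 2 with hn | hn
  · have hk : k ≤ 1 := by omega
    have hj : j ≤ 2 := by omega
    interval_cases k <;> interval_cases j <;> first | omega | norm_num [diagEntry]
  · have hj : (0 : ℝ) ≤ j := j.cast_nonneg
    have hk : (0 : ℝ) ≤ k := k.cast_nonneg
    have hn' : (3 : ℝ) ≤ j + 2 * k := by exact_mod_cast hn
    rw [diagEntry, if_neg (by simpa using hn.ne'), abs_of_nonpos (by nlinarith [hj, hk])]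
    refine ⟨?_, ?_, ?_⟩ <;> nlinarith [hj, hk]

lemma diagEntry_ne_zero (i : ℕ × ℕ) : diagEntry i ≠ 0 :=
  abs_pos.mp (zero_lt_one.trans_le (diagEntry_bounds i.1 i.2).1)

/-- The inverse of the diagonal part of `Δ + 6`. -/
def diagInv : PowerSeriesAlg →L[ℝ] PowerSeriesAlg :=
  lift (C := 1) (fun i => (diagEntry i)⁻¹ • basisVec i) fun i => by
    rw [norm_smul, norm_basisVec, mul_one, norm_inv]
    exact inv_le_one_of_one_le₀ (diagEntry_bounds i.1 i.2).1

/-- The part of `(Δ + 6) ∘ diagInv - 1` that lowers the degree in `z`. -/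
def lowerZ : PowerSeriesAlg →L[ℝ] PowerSeriesAlg :=
  lift (C := 1 / 32)
    (fun i => (i.1 * (i.1 - 1) / (64 * diagEntry i) : ℝ) • basisVec (i.1 - 2, i.2)) fun i => by
    obtain ⟨hpos, hz, -⟩ := diagEntry_bounds i.1 i.2
    have hle : |(i.1 * (i.1 - 1) / (64 * diagEntry i) : ℝ)| ≤ 1 / 32 := by
      rw [abs_div, abs_mul 64, abs_of_pos (by norm_num : (0 : ℝ) < 64),
        div_le_iff₀ (by linarith)]
      linarith
    rw [norm_smul, norm_basisVec, mul_one, Real.norm_eq_abs]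
    exact hle

/-- The part of `(Δ + 6) ∘ diagInv - 1` that lowers the degree in `u`. -/
def lowerU : PowerSeriesAlg →L[ℝ] PowerSeriesAlg :=
  lift (C := 1 / 32)
    (fun i => (4 * (i.2 * (i.2 - 1)) / diagEntry i : ℝ) •
      ((1 / 4096 : ℝ) • basisVec (i.1, i.2 - 2) - (1 / 64 : ℝ) • basisVec (i.1 + 2, i.2 - 2)))
    fun i => by
    obtain ⟨-, -, hu⟩ := diagEntry_bounds i.1 i.2
    have hle : |4 * (i.2 * (i.2 - 1) : ℝ) / diagEntry i| ≤ 1 := by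
      rw [abs_div]
      exact div_le_one_of_le₀ hu (abs_nonneg _)
    rw [norm_smul, Real.norm_eq_abs]
    calc _ ≤ 1 * (‖(1 / 4096 : ℝ) • basisVec (i.1, i.2 - 2)‖ +
          ‖(1 / 64 : ℝ) • basisVec (i.1 + 2, i.2 - 2)‖) := by
          gcongr
          exact norm_sub_le _ _
      _ ≤ 1 / 32 := by
          rw [norm_smul, norm_smul, norm_basisVec, norm_basisVec]
          norm_num

/-- `1 + offDiag ε` is `(Δ + 6) ∘ diagInv`, up to the kernel of `Δ + 6`, when the second variable
stands for `ε u` in place of `u`. -/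
def offDiag (ε : ℝ) : PowerSeriesAlg →L[ℝ] PowerSeriesAlg := lowerZ + ε ^ 2 • lowerU

lemma isUnit_one_add_offDiag {ε : ℝ} (hε : |ε| ≤ 1) : IsUnit (1 + offDiag ε) := by
  have hZ : ‖lowerZ‖ ≤ 1 / 32 := norm_lift_le _ (by norm_num)
  have hU : ‖lowerU‖ ≤ 1 / 32 := norm_lift_le _ (by norm_num)
  have hε2 : ‖ε ^ 2‖ ≤ 1 := by
    rw [norm_pow]
    exact pow_le_one₀ (norm_nonneg ε) hε
  rw [← sub_neg_eq_add]
  refine isUnit_one_sub_of_norm_lt_one ?_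
  calc ‖-offDiag ε‖ ≤ ‖lowerZ‖ + ‖ε ^ 2‖ * ‖lowerU‖ := by
        rw [norm_neg, offDiag, ← norm_smul]
        exact norm_add_le _ _
    _ ≤ 1 / 32 + 1 * (1 / 32) := by gcongr
    _ < 1 := by norm_num

lemma helmholtz_diagInv {b : PowerSeriesAlg} (hz : coord (2, 0) b = 0) (hu : coord (0, 1) b = 0)
    {θ : ℝ} (hθ : sin θ ≠ 0) (φ : ℝ) :
    lapEval θ φ (diagInv b) + 6 * sphEval θ φ (diagInv b) =
      sphEval θ φ ((1 + offDiag 1) b) := by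
  have h : (lapEval θ φ).comp diagInv + (6 : ℝ) • (sphEval θ φ).comp diagInv +
      (coord (2, 0)).smulRight (sphEval θ φ (basisVec (2, 0))) +
      (coord (0, 1)).smulRight (sphEval θ φ (basisVec (0, 1))) =
        (sphEval θ φ).comp (1 + offDiag 1) := by
    refine clm_ext ?_
    rintro ⟨j, k⟩
    simp only [add_apply, smul_apply, ContinuousLinearMap.comp_apply,
      ContinuousLinearMap.smulRight_apply, one_apply_eq_self, offDiag, diagInv, lowerZ, lowerU,
      lift_basisVec, map_add, map_smul, map_sub, smul_eq_mul, lapEval_basisVec j k hθ,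
      coord_basisVec, Prod.mk.injEq, one_pow, one_mul]
    by_cases hn : j + 2 * k = 2
    · obtain ⟨rfl, rfl⟩ | ⟨rfl, rfl⟩ : j = 2 ∧ k = 0 ∨ j = 0 ∧ k = 1 := by omega
      · norm_num [diagEntry]
        ring
      · norm_num [diagEntry]
    · have hδ : diagEntry (j, k) = 6 - (j + 2 * k) * (j + 2 * k + 1) := by
        rw [diagEntry, if_neg hn]
      have hδ₀ := diagEntry_ne_zero (j, k)
      rw [if_neg (by omega), if_neg (by omega)]
      field_simp
      rw [hδ]
      ring
  simpa [hz, hu] using congr($h b)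

/-- The substitution `u ↦ ε u` in a power series in `z` and `u`. -/
def scale (ε : ℝ) (hε : |ε| ≤ 1) : PowerSeriesAlg →L[ℝ] PowerSeriesAlg :=
  lift (C := 1) (fun i => ε ^ i.2 • basisVec i) fun i => by
    rw [norm_smul, norm_basisVec, mul_one, norm_pow]
    exact pow_le_one₀ (norm_nonneg ε) hε

variable {ε : ℝ} (hε : |ε| ≤ 1)

lemma scale_basisVec (i : ℕ × ℕ) : scale ε hε (basisVec i) = ε ^ i.2 • basisVec i :=
  lift_basisVec _ i

lemma norm_scale_le : ‖scale ε hε‖ ≤ 1 := norm_lift_le _ zero_le_one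

lemma isEndomorphism_scale : IsEndomorphism (scale ε hε) where
  basisVec_zero := by rw [scale_basisVec, Prod.snd_zero, pow_zero, one_smul]
  basisVec_add i j := by
    simp only [scale_basisVec, Prod.snd_add, pow_add, map_smul, smul_apply, conv_basisVec,
      smul_smul, mul_comm]

lemma coord_scale (i : ℕ × ℕ) (b : PowerSeriesAlg) :
    coord i (scale ε hε b) = ε ^ i.2 * coord i b := by
  have h : (coord i).comp (scale ε hε) = ε ^ i.2 • coord i := clm_ext fun j => by
    simp only [ContinuousLinearMap.comp_apply, scale_basisVec, map_smul, smul_apply,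
      coord_basisVec, smul_eq_mul]
    split_ifs with hij
    · rw [hij]
    · rw [mul_zero, mul_zero]
  exact congr($h b)

lemma scale_diagInv (b : PowerSeriesAlg) :
    scale ε hε (diagInv b) = diagInv (scale ε hε b) := by
  have h : (scale ε hε).comp diagInv = diagInv.comp (scale ε hε) := clm_ext fun i => by
    simp only [ContinuousLinearMap.comp_apply, diagInv, lift_basisVec, map_smul, scale_basisVec]
    exact smul_comm ..
  exact congr($h b)

lemma scale_one_add_offDiag (b : PowerSeriesAlg) :
    scale ε hε ((1 + offDiag ε) b) = (1 + offDiag 1) (scale ε hε b) := by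
  have h : (scale ε hε).comp (1 + offDiag ε) = (1 + offDiag 1).comp (scale ε hε) := by
    refine clm_ext ?_
    rintro ⟨j, k⟩
    simp only [ContinuousLinearMap.comp_apply, add_apply, one_apply_eq_self, offDiag, smul_apply,
      lowerZ, lowerU, lift_basisVec, map_add, map_sub, map_smul, scale_basisVec, one_pow, one_smul]
    rcases k with _ | _ | k
    · simp
    · simp
      module
    · simp only [Nat.reduceSubDiff, pow_add]
      module
  exact congr($h b)

/-- The array `w` solves `(Δ + 6) w = y` after the substitution `u ↦ ε u`. The resonant components
of `b` have to vanish because `diagInv` does not invert `Δ + 6` on them. -/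
def IsHelmholtzSolution (ε : ℝ) (w y : PowerSeriesAlg) : Prop :=
  ∃ b, (1 + offDiag ε) b = y ∧ coord (2, 0) b = 0 ∧ coord (0, 1) b = 0 ∧ diagInv b = w

lemma IsHelmholtzSolution.helmholtz_scale {w y : PowerSeriesAlg} (h : IsHelmholtzSolution ε w y)
    {θ : ℝ} (hθ : sin θ ≠ 0) (φ : ℝ) :
    lapEval θ φ (scale ε hε w) + 6 * sphEval θ φ (scale ε hε w) = sphEval θ φ (scale ε hε y) := by
  obtain ⟨b, rfl, hz, hu, rfl⟩ := h
  rw [scale_diagInv, scale_one_add_offDiag]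
  exact helmholtz_diagInv (by rw [coord_scale, hz, mul_zero]) (by rw [coord_scale, hu, mul_zero])
    hθ φ

end RossbyHaurwitz

section FixedPoint

open Filter Asymptotics Topology

lemma exists_fixedPoint_curve {E : Type*} [NormedAddCommGroup E] [NormedSpace ℝ E]
    [CompleteSpace E] {H : ℝ × E → E} {w : E} (hH : ContDiffAt ℝ 1 H (0, w))
    (hconst : ∀ x, H (0, x) = w) :
    ∃ x : ℝ → E, (∀ᶠ ε in 𝓝 0, H (ε, x ε) = x ε) ∧ (fun ε => x ε - w) =O[𝓝 0] id := by
  set D := fderiv ℝ H (0, w)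
  have hH' : HasStrictFDerivAt H D (0, w) := hH.hasStrictFDerivAt one_ne_zero
  have hsub : HasStrictFDerivAt (fun p : ℝ × E => p.2 - H p) (.snd ℝ ℝ E - D) (0, w) :=
    hasStrictFDerivAt_snd.sub hH'
  have hD : D ∘L .inr ℝ ℝ E = 0 := by
    have hslice : HasFDerivAt (fun x : E => H (0, x)) (D ∘L .inr ℝ ℝ E) w :=
      hH'.hasFDerivAt.comp w (hasFDerivAt_prodMk_right _ _)
    simp only [hconst] at hslice
    exact hslice.unique (hasFDerivAt_const _ _)
  have hinv : ((ContinuousLinearMap.snd ℝ ℝ E - D) ∘L .inr ℝ ℝ E).IsInvertible := by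
    rw [ContinuousLinearMap.sub_comp, hD, sub_zero, ContinuousLinearMap.snd_comp_inr]
    exact ⟨.refl ℝ E, rfl⟩
  set x := hsub.implicitFunctionOfProdDomain hinv
  have hx₀ : x 0 = w :=
    (hsub.eventually_apply_eq_iff_implicitFunctionOfProdDomain hinv).self_of_nhds.mp rfl
  refine ⟨x, ?_, ?_⟩
  · filter_upwards [hsub.eventually_apply_implicitFunctionOfProdDomain hinv] with ε hε
    rw [hconst, sub_self] at hε
    exact (sub_eq_zero.mp hε).symm
  · have hO := (hsub.hasStrictFDerivAt_implicitFunctionOfProdDomain hinv).hasFDerivAt.isBigO_sub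
    simp only [sub_zero] at hO
    rw [← hx₀]
    exact hO

end FixedPoint

namespace RossbyHaurwitz

open EllOne Filter Asymptotics Topology Polynomial

/-- The inverse of `1 + offDiag ε`; the inverse of `Δ + 6` is `diagInv ∘ resolvent ε`. -/
def resolvent (ε : ℝ) : PowerSeriesAlg →L[ℝ] PowerSeriesAlg := Ring.inverse (1 + offDiag ε)

lemma one_add_offDiag_resolvent {ε : ℝ} (hε : |ε| ≤ 1) (y : PowerSeriesAlg) :
    (1 + offDiag ε) (resolvent ε y) = y :=
  congr($(Ring.mul_inverse_cancel _ (isUnit_one_add_offDiag hε)) y)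

lemma contDiffAt_resolvent : ContDiffAt ℝ 1 resolvent 0 := by
  obtain ⟨w, hw⟩ := isUnit_one_add_offDiag (ε := 0) (by simp)
  refine ContDiffAt.comp (g := Ring.inverse) 0 (hw ▸ contDiffAt_ringInverse ℝ w) ?_
  unfold offDiag
  fun_prop

/-- The components of `resolvent 0 y` along `z²` and `u`. They have to vanish for `Δ w + 6 w = y`
to be solvable, since both directions are resonant. -/
def resonance (y : PowerSeriesAlg) : ℝ × ℝ :=
  (coord (2, 0) (resolvent 0 y), coord (0, 1) (resolvent 0 y))

lemma contDiffAt_resolvent_polyEval (Φ : PowerSeriesAlg) (G g₁ g₂ : ℝ[X])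
    (y : PowerSeriesAlg × ℝ × ℝ) :
    ContDiffAt ℝ 1 (fun x : ℝ × PowerSeriesAlg × ℝ × ℝ =>
      resolvent x.1 (polyEval G (Φ + x.1 • x.2.1) + x.2.2.1 • polyEval g₁ (Φ + x.1 • x.2.1)
        + x.2.2.2 • polyEval g₂ (Φ + x.1 • x.2.1))) (0, y) := by
  have hpoly (q : ℝ[X]) : ContDiff ℝ 1
      (fun x : ℝ × PowerSeriesAlg × ℝ × ℝ => polyEval q (Φ + x.1 • x.2.1)) :=
    ((contDiff_polyEval q).of_le le_top).comp (by fun_prop)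
  have hres : ContDiffAt ℝ 1 (fun x : ℝ × PowerSeriesAlg × ℝ × ℝ => resolvent x.1) (0, y) :=
    ContDiffAt.comp (g := resolvent) _ contDiffAt_resolvent contDiffAt_fst
  exact hres.clm_apply (ContDiff.contDiffAt (by fun_prop))

/- Lyapunov–Schmidt reduction: the multipliers `r` of `g₁` and `g₂` are solved for together with
`W`. Feeding the updated `r` into the update of `W` makes the map whose fixed points are sought
constant for `ε = 0`. -/
lemma exists_branch {Φ : PowerSeriesAlg} {G g₁ g₂ : ℝ[X]} (hG : resonance (polyEval G Φ) = 0)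
    (hg₁ : resonance (polyEval g₁ Φ) = (1, 0)) (hg₂ : resonance (polyEval g₂ Φ) = (0, 1)) :
    ∃ (W : ℝ → PowerSeriesAlg) (p : ℝ → ℝ[X]),
      (fun ε => W ε - diagInv (resolvent 0 (polyEval G Φ))) =O[𝓝 0] id ∧
      ∀ᶠ ε in 𝓝 0, IsHelmholtzSolution ε (W ε) (polyEval (p ε) (Φ + ε • W ε)) := by
  let B (x : ℝ × PowerSeriesAlg × ℝ × ℝ) : PowerSeriesAlg :=
    resolvent x.1 (polyEval G (Φ + x.1 • x.2.1) + x.2.2.1 • polyEval g₁ (Φ + x.1 • x.2.1)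
      + x.2.2.2 • polyEval g₂ (Φ + x.1 • x.2.1))
  let R (x : ℝ × PowerSeriesAlg × ℝ × ℝ) : ℝ × ℝ :=
    (x.2.2.1 - coord (2, 0) (B x), x.2.2.2 - coord (0, 1) (B x))
  let H (x : ℝ × PowerSeriesAlg × ℝ × ℝ) : PowerSeriesAlg × ℝ × ℝ :=
    (diagInv (B (x.1, x.2.1, R x)), R x)
  let W₀ : PowerSeriesAlg := diagInv (resolvent 0 (polyEval G Φ))
  have hconst (x) : H (0, x) = (W₀, 0) := by
    obtain ⟨W, r₁, r₂⟩ := x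
    simp only [resonance, Prod.mk_eq_zero, Prod.mk.injEq] at hG hg₁ hg₂
    simp [H, R, B, W₀, hG, hg₁, hg₂]
  have hB : ContDiffAt ℝ 1 B (0, W₀, 0) := contDiffAt_resolvent_polyEval Φ G g₁ g₂ (W₀, 0)
  have hR : ContDiffAt ℝ 1 R (0, W₀, 0) := by fun_prop
  have hR₀ : R (0, W₀, 0) = 0 := congr(($(hconst (W₀, 0))).2)
  have hH : ContDiffAt ℝ 1 H (0, W₀, 0) := by
    refine (contDiffAt_const.clm_apply (ContDiffAt.comp (g := B) _ ?_ ?_)).prodMk hR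
    · rwa [hR₀]
    · fun_prop
  obtain ⟨x, hfix, hO⟩ := exists_fixedPoint_curve hH hconst
  refine ⟨fun ε => (x ε).1, fun ε => G + (x ε).2.1 • g₁ + (x ε).2.2 • g₂, ?_, ?_⟩
  · exact (isBigO_of_le _ fun ε => norm_fst_le (x ε - (W₀, 0))).trans hO
  · have hsmall : ∀ᶠ ε : ℝ in 𝓝 0, |ε| ≤ 1 :=
      (continuous_abs.tendsto' 0 0 abs_zero).eventually_le_const one_pos
    filter_upwards [hfix, hsmall] with ε hε hε₁
    have hRε : R (ε, x ε) = (x ε).2 := congr(($hε).2)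
    have hWε : diagInv (B (ε, (x ε).1, R (ε, x ε))) = (x ε).1 := congr(($hε).1)
    refine ⟨B (ε, x ε), ?_, ?_, ?_, ?_⟩
    · simp only [B, polyEval_add, polyEval_smul, one_add_offDiag_resolvent hε₁]
    · simpa [R] using congr(($hRε).1)
    · simpa [R] using congr(($hRε).2)
    · rwa [hRε] at hWε

end RossbyHaurwitz

section Gegenbauer

open Polynomial

lemma integral_derivative_eval (p : ℝ[X]) (a b : ℝ) :
    ∫ x in a..b, (derivative p).eval x = p.eval b - p.eval a :=
  intervalIntegral.integral_eq_sub_of_hasDerivAt (fun x _ => p.hasDerivAt x)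
    ((derivative p).continuous.intervalIntegrable a b)

/-- The Gegenbauer operator `(1 - x²) f'' - 2 (m + 1) x f'`. Up to a constant it is the Laplacian on
functions `(1 - z²)^(m/2) f(z)` of longitudinal frequency `m`. -/
def gegenbauer (m : ℕ) (f : ℝ[X]) : ℝ[X] :=
  (1 - X ^ 2) * derivative (derivative f) - C (2 * (m + 1) : ℝ) * X * derivative f

lemma derivative_one_sub_sq_mul (m : ℕ) (f q : ℝ[X]) :
    derivative ((1 - X ^ 2) ^ (m + 1) * (q * derivative f - f * derivative q)) =
      (1 - X ^ 2) ^ m * (q * gegenbauer m f - f * gegenbauer m q) := by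
  simp only [gegenbauer, derivative_mul, derivative_sub, derivative_pow, derivative_one,
    derivative_X, map_mul, map_add, map_natCast, map_one, map_ofNat, Nat.cast_add, Nat.cast_one,
    add_tsub_cancel_right]
  norm_num
  ring

lemma integral_gegenbauer_symm (m : ℕ) (f q : ℝ[X]) :
    ∫ x in (-1 : ℝ)..1, ((1 - X ^ 2) ^ m * (q * gegenbauer m f)).eval x =
      ∫ x in (-1 : ℝ)..1, ((1 - X ^ 2) ^ m * (f * gegenbauer m q)).eval x := by
  have h := integral_derivative_eval
    ((1 - X ^ 2) ^ (m + 1) * (q * derivative f - f * derivative q)) (-1) 1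
  rw [derivative_one_sub_sq_mul] at h
  simp only [mul_sub, eval_sub] at h
  rw [intervalIntegral.integral_sub (Polynomial.continuous _ |>.intervalIntegrable _ _)
    (Polynomial.continuous _ |>.intervalIntegrable _ _)] at h
  refine sub_eq_zero.mp (h.trans ?_)
  simp

lemma gegenbauer_X_pow (m j : ℕ) :
    gegenbauer m (X ^ j) =
      C (j * (j - 1) : ℝ) * X ^ (j - 2) - C (j * (j + 1 + 2 * m) : ℝ) * X ^ j := by
  have hC : (C 2 : ℝ[X]) = 2 := rfl
  rcases j with _ | _ | j
  · simp [gegenbauer]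
  · simp [gegenbauer, hC]
    ring
  · simp [gegenbauer, hC]
    ring

end Gegenbauer

open Real in
lemma integral_comp_cos_mul_sin {f : ℝ → ℝ} (hf : Continuous f) :
    ∫ θ in (0 : ℝ)..π, f (cos θ) * sin θ = ∫ x in (-1 : ℝ)..1, f x := by
  have h := intervalIntegral.integral_comp_mul_deriv (a := π) (b := 0) (g := f)
    (fun θ _ => hasDerivAt_cos θ) (by fun_prop) hf
  rw [cos_zero, cos_pi] at h
  rw [← h, intervalIntegral.integral_symm, ← intervalIntegral.integral_neg]
  simp only [Function.comp_apply, mul_neg]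

namespace RossbyHaurwitz

open EllOne Real Polynomial

/-- The value at `z` of the coefficient of `u^k`, as a functional on power series in `z` and `u`. -/
def sliceAt (k : ℕ) (z : ℝ) : PowerSeriesAlg →L[ℝ] ℝ :=
  (64⁻¹ : ℝ) ^ k • (evalAt (z / 8) 0).comp (shiftSnd ^ k)

lemma shiftSnd_pow_basisVec (k j l : ℕ) :
    (shiftSnd ^ k) (basisVec (j, l)) = if k ≤ l then basisVec (j, l - k) else 0 := by
  induction k with
  | zero => simp
  | succ k ih =>
    rw [pow_succ', mul_apply_eq_comp, ih]
    split_ifs with h h' h'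
    · rw [shiftSnd, lift_basisVec, if_neg (by simp; omega), Nat.sub_sub]
    · rw [shiftSnd, lift_basisVec, if_pos (by simp; omega)]
    · omega
    · exact map_zero _

lemma sliceAt_basisVec (k : ℕ) {z : ℝ} (hz : |z / 8| < 1) (j l : ℕ) :
    sliceAt k z (basisVec (j, l)) = if l = k then (8⁻¹ : ℝ) ^ (j + 2 * k) * z ^ j else 0 := by
  rw [sliceAt, smul_apply, ContinuousLinearMap.comp_apply, shiftSnd_pow_basisVec]
  rcases lt_trichotomy l k with h | rfl | h
  · rw [if_neg (by omega), if_neg (by omega), map_zero, smul_zero]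
  · rw [if_pos le_rfl, if_pos rfl, evalAt_basisVec hz (by simp), Nat.sub_self, pow_zero, pow_add,
      pow_mul, show (8⁻¹ : ℝ) ^ 2 = 64⁻¹ by norm_num, smul_eq_mul]
    ring
  · rw [if_pos h.le, if_neg (by omega), evalAt_basisVec hz (by simp), zero_pow (by omega),
      mul_zero, smul_zero]

lemma isCharacter_sliceAt_zero {z : ℝ} (hz : |z / 8| < 1) : IsCharacter (sliceAt 0 z) := by
  have h : sliceAt 0 z = evalAt (z / 8) 0 := by
    rw [sliceAt, pow_zero, pow_zero, one_smul]
    exact ContinuousLinearMap.comp_id _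
  exact h ▸ isCharacter_evalAt hz (by simp)

lemma isPointDerivation_sliceAt_one {z : ℝ} (hz : |z / 8| < 1) :
    IsPointDerivation (sliceAt 0 z) (sliceAt 1 z) where
  basisVec_zero := by rw [Prod.zero_eq_mk, sliceAt_basisVec 1 hz, if_neg (by simp)]
  basisVec_add := by
    rintro ⟨j, k⟩ ⟨j', k'⟩
    simp only [Prod.mk_add_mk, sliceAt_basisVec _ hz]
    split_ifs <;> first | omega | ring

lemma continuous_sliceAt_cos (k : ℕ) : Continuous (fun θ => sliceAt k (cos θ)) :=
  ((contDiff_evalAt (n := 0) (s := fun θ => cos θ / 8) (t := fun _ => 0) (by fun_prop)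
    contDiff_const abs_cos_div_lt (by simp)).continuous.clm_comp continuous_const).fun_const_smul _

/-- The integral over `-1 ≤ z ≤ 1` of the coefficient of `u^k` against the weight
`(1 - z²)^(2k) q(z)`. The variable `z = cos θ` is substituted to stay inside the domain of
convergence. -/
def moment (k : ℕ) (q : ℝ[X]) : PowerSeriesAlg →L[ℝ] ℝ :=
  ∫ θ in (0 : ℝ)..π, (((1 - X ^ 2) ^ (2 * k) * q).eval (cos θ) * sin θ) • sliceAt k (cos θ)

lemma moment_apply (k : ℕ) (q : ℝ[X]) (a : PowerSeriesAlg) :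
    moment k q a = ∫ θ in (0 : ℝ)..π,
      ((1 - X ^ 2) ^ (2 * k) * q).eval (cos θ) * sin θ * sliceAt k (cos θ) a := by
  rw [moment, ContinuousLinearMap.intervalIntegral_apply]
  · rfl
  · refine Continuous.intervalIntegrable ?_ _ _
    have := continuous_sliceAt_cos k
    fun_prop

lemma moment_of_sliceAt {k : ℕ} {q f : ℝ[X]} {a : PowerSeriesAlg}
    (h : ∀ z, |z / 8| < 1 → sliceAt k z a = f.eval z) :
    moment k q a = ∫ x in (-1 : ℝ)..1, ((1 - X ^ 2) ^ (2 * k) * (q * f)).eval x := by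
  rw [moment_apply, ← integral_comp_cos_mul_sin (Polynomial.continuous _)]
  refine intervalIntegral.integral_congr fun θ _ => ?_
  simp only [h _ (abs_cos_div_lt θ), eval_mul]
  ring

end RossbyHaurwitz

section GegenbauerMoments

open Polynomial

lemma integral_gegenbauer_eigenfunction {m : ℕ} {q : ℝ[X]} {c : ℝ} (hq : gegenbauer m q = C c * q)
    (j : ℕ) :
    j * (j - 1) * ∫ x in (-1 : ℝ)..1, ((1 - X ^ 2) ^ m * (q * X ^ (j - 2))).eval x =
      (c + j * (j + 1 + 2 * m)) * ∫ x in (-1 : ℝ)..1, ((1 - X ^ 2) ^ m * (q * X ^ j)).eval x := by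
  have hint (p : ℝ[X]) : IntervalIntegrable (fun x => p.eval x) volume (-1) 1 :=
    p.continuous.intervalIntegrable _ _
  have hsymm := integral_gegenbauer_symm m (X ^ j) q
  have hleft : (1 - X ^ 2) ^ m * (q * gegenbauer m (X ^ j)) =
      C (j * (j - 1) : ℝ) * ((1 - X ^ 2) ^ m * (q * X ^ (j - 2))) -
        C (j * (j + 1 + 2 * m) : ℝ) * ((1 - X ^ 2) ^ m * (q * X ^ j)) := by
    rw [gegenbauer_X_pow]
    ring
  have hright : (1 - X ^ 2) ^ m * (X ^ j * gegenbauer m q) =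
      C c * ((1 - X ^ 2) ^ m * (q * X ^ j)) := by
    rw [hq]
    ring
  rw [hleft, hright] at hsymm
  simp only [eval_sub, eval_C_mul] at hsymm
  rw [intervalIntegral.integral_sub ((hint _).const_mul _) ((hint _).const_mul _),
    intervalIntegral.integral_const_mul, intervalIntegral.integral_const_mul,
    intervalIntegral.integral_const_mul] at hsymm
  linear_combination hsymm

end GegenbauerMoments

namespace RossbyHaurwitz

open EllOne Real Polynomial

lemma moment_basisVec (k : ℕ) (q : ℝ[X]) (j l : ℕ) :
    moment k q (basisVec (j, l)) = if l = k then
      8⁻¹ ^ (j + 2 * k) * ∫ x in (-1 : ℝ)..1, ((1 - X ^ 2) ^ (2 * k) * (q * X ^ j)).eval x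
      else 0 := by
  split_ifs with h
  · rw [← intervalIntegral.integral_const_mul,
      moment_of_sliceAt (f := C (8⁻¹ ^ (j + 2 * k)) * X ^ j)]
    · congr! 2
      simp only [eval_mul, eval_C]
      ring
    · intro z hz
      simp [sliceAt_basisVec k hz, h]
  · rw [moment_of_sliceAt (f := 0)]
    · simp
    · intro z hz
      simp [sliceAt_basisVec k hz, h]

lemma one_add_offDiag_zero_basisVec (j l : ℕ) :
    (1 + offDiag 0) (basisVec (j, l)) =
      basisVec (j, l) + (j * (j - 1) / (64 * diagEntry (j, l)) : ℝ) • basisVec (j - 2, l) := by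
  simp [offDiag, lowerZ]

lemma moment_one_add_offDiag_basisVec {k : ℕ} {q : ℝ[X]} {c : ℝ}
    (hq : gegenbauer (2 * k) q = C c * q) {j l : ℕ} (hjl : j + 2 * l ≠ 2) :
    moment k q ((1 + offDiag 0) (basisVec (j, l))) =
      (c + 6 - 2 * k * (2 * k + 1)) * moment k q (diagInv (basisVec (j, l))) := by
  rw [one_add_offDiag_zero_basisVec, diagInv, lift_basisVec, map_add, map_smul, map_smul,
    moment_basisVec, moment_basisVec]
  split_ifs with h
  · subst h
    have hrec := integral_gegenbauer_eigenfunction hq j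
    have hpow := inv_eight_pow_sub_two j (2 * l)
    have hδ : diagEntry (j, l) = 6 - (j + 2 * l) * (j + 2 * l + 1) := by rw [diagEntry, if_neg hjl]
    have hδ₀ := diagEntry_ne_zero (j, l)
    set I := ∫ x in (-1 : ℝ)..1, ((1 - X ^ 2) ^ (2 * l) * (q * X ^ j)).eval x
    set I' := ∫ x in (-1 : ℝ)..1, ((1 - X ^ 2) ^ (2 * l) * (q * X ^ (j - 2))).eval x
    push_cast at hrec
    simp only [smul_eq_mul]
    field_simp
    rw [hδ]
    linear_combination 64 * (8⁻¹ : ℝ) ^ (j + 2 * l) * hrec + 64 * I' * hpow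
  · simp

lemma mul_moment_diagInv_resolvent {q : ℝ[X]} {c : ℝ} (hq : gegenbauer 2 q = C c * q) (hc : c ≠ 0)
    (y : PowerSeriesAlg) : c * moment 1 q (diagInv (resolvent 0 y)) = moment 1 q y := by
  have h : c • (moment 1 q).comp diagInv = (moment 1 q).comp (1 + offDiag 0) := by
    refine clm_ext ?_
    rintro ⟨j, l⟩
    rw [smul_apply, ContinuousLinearMap.comp_apply, ContinuousLinearMap.comp_apply, smul_eq_mul]
    by_cases hjl : j + 2 * l = 2
    · have hzero : moment 1 q (basisVec (0, 1)) = 0 := by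
        have hrec := integral_gegenbauer_eigenfunction hq 0
        simp only [Nat.cast_zero, zero_mul, add_zero] at hrec
        rw [moment_basisVec, if_pos rfl, mul_one, (mul_eq_zero_iff_left hc).mp hrec.symm, mul_zero]
      rw [one_add_offDiag_zero_basisVec, diagInv, lift_basisVec]
      obtain ⟨rfl, rfl⟩ | ⟨rfl, rfl⟩ : j = 2 ∧ l = 0 ∨ j = 0 ∧ l = 1 := by omega
      · simp [moment_basisVec]
      · simp [hzero]
    · rw [moment_one_add_offDiag_basisVec (k := 1) hq hjl]
      push_cast
      ring
  have hres := one_add_offDiag_resolvent (ε := 0) (by simp) y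
  simpa only [smul_apply, smul_eq_mul, ContinuousLinearMap.comp_apply, hres] using
    congr($h (resolvent 0 y))

lemma coord_eq_smul_moment {k j₀ : ℕ} {q : ℝ[X]} {c : ℝ} (hdeg : j₀ + 2 * k = 2)
    (hq : gegenbauer (2 * k) q = C (2 * k * (2 * k + 1) - 6 : ℝ) * q)
    (hc : c * moment k q ((1 + offDiag 0) (basisVec (j₀, k))) = 1) (y : PowerSeriesAlg) :
    coord (j₀, k) (resolvent 0 y) = c * moment k q y := by
  have h : coord (j₀, k) = c • (moment k q).comp (1 + offDiag 0) := by
    refine clm_ext ?_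
    rintro ⟨j, l⟩
    rw [smul_apply, ContinuousLinearMap.comp_apply, coord_basisVec, smul_eq_mul]
    split_ifs with hjl
    · rw [hjl, hc]
    · by_cases hn : j + 2 * l = 2
      · have hl : l ≠ k := fun hl => hjl (Prod.ext (by simp; omega) hl)
        rw [one_add_offDiag_zero_basisVec, map_add, map_smul, moment_basisVec, moment_basisVec,
          if_neg hl, if_neg hl, smul_zero, add_zero, mul_zero]
      · rw [moment_one_add_offDiag_basisVec hq hn]
        ring
  rw [h, smul_apply, ContinuousLinearMap.comp_apply, one_add_offDiag_resolvent (by simp),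
    smul_eq_mul]

lemma resonance_eq (y : PowerSeriesAlg) :
    resonance y = (120 * moment 0 (3 * X ^ 2 - 1) y, 60 * moment 1 1 y) := by
  have hC (n : ℕ) [n.AtLeastTwo] : (C (OfNat.ofNat n) : ℝ[X]) = OfNat.ofNat n := rfl
  have hz₀ : moment 0 (3 * X ^ 2 - 1) (basisVec (0, 0)) = 0 := by
    norm_num [moment_basisVec]
  have hz₂ : moment 0 (3 * X ^ 2 - 1) (basisVec (2, 0)) = 1 / 120 := by
    have hexpand (x : ℝ) : (3 * x ^ 2 - 1) * x ^ 2 = 3 * x ^ 4 - x ^ 2 := by ring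
    norm_num [moment_basisVec, hexpand]
  have hu : moment 1 1 (basisVec (0, 1)) = 1 / 60 := by
    have hexpand (x : ℝ) : (1 - x ^ 2) ^ 2 = 1 - 2 * x ^ 2 + x ^ 4 := by ring
    simp only [moment_basisVec, if_true, mul_one, pow_zero, eval_pow, eval_sub, eval_one,
      eval_X, hexpand]
    rw [intervalIntegral.integral_add (Continuous.intervalIntegrable (by fun_prop) _ _) (by simp)]
    norm_num
  rw [resonance, coord_eq_smul_moment (c := 120) (q := 3 * X ^ 2 - 1) rfl,
    coord_eq_smul_moment (c := 60) (q := 1) rfl]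
  · norm_num [gegenbauer]
  · rw [one_add_offDiag_zero_basisVec]
    norm_num [hu]
  · simp [gegenbauer, hC]
    ring
  · rw [one_add_offDiag_zero_basisVec]
    norm_num [hz₀, hz₂]

/-- The array that represents the zonal function `g z + 3h z²`. -/
def zonalPart (g h : ℝ) : PowerSeriesAlg := g • monomial 1 0 + (3 * h) • monomial 2 0

/-- The array that represents `g z + 3h z² + u`, the leading order of the branch of solutions. -/
def leadingOrder (g h : ℝ) : PowerSeriesAlg := zonalPart g h + monomial 0 1

lemma sliceAt_monomial (k : ℕ) {z : ℝ} (hz : |z / 8| < 1) (j l : ℕ) :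
    sliceAt k z (monomial j l) = if l = k then z ^ j else 0 := by
  rw [monomial, map_smul, sliceAt_basisVec k hz]
  split_ifs with h
  · rw [h, smul_eq_mul, ← mul_assoc, ← mul_pow, mul_inv_cancel₀ (by norm_num), one_pow, one_mul]
  · exact smul_zero _

lemma sliceAt_zero_leadingOrder (g h : ℝ) {z : ℝ} (hz : |z / 8| < 1) :
    sliceAt 0 z (leadingOrder g h) = g * z + 3 * h * z ^ 2 := by
  simp [leadingOrder, zonalPart, sliceAt_monomial 0 hz]

lemma sliceAt_one_leadingOrder (g h : ℝ) {z : ℝ} (hz : |z / 8| < 1) :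
    sliceAt 1 z (leadingOrder g h) = 1 := by
  simp [leadingOrder, zonalPart, sliceAt_monomial 1 hz]

lemma moment_zero_polyEval_leadingOrder (g h : ℝ) (q G : ℝ[X]) :
    moment 0 q (polyEval G (leadingOrder g h)) =
      ∫ x in (-1 : ℝ)..1, q.eval x * G.eval (g * x + 3 * h * x ^ 2) := by
  rw [moment_of_sliceAt (f := G.comp (C g * X + C (3 * h) * X ^ 2))]
  · simp
  · intro z hz
    rw [(isCharacter_sliceAt_zero hz).map_polyEval, sliceAt_zero_leadingOrder g h hz]
    simp

lemma moment_one_polyEval_leadingOrder (g h : ℝ) (q G : ℝ[X]) :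
    moment 1 q (polyEval G (leadingOrder g h)) =
      ∫ x in (-1 : ℝ)..1,
        (1 - x ^ 2) ^ 2 * (q.eval x * (derivative G).eval (g * x + 3 * h * x ^ 2)) := by
  rw [moment_of_sliceAt (f := (derivative G).comp (C g * X + C (3 * h) * X ^ 2))]
  · simp
  · intro z hz
    rw [(isPointDerivation_sliceAt_one hz).map_polyEval (isCharacter_sliceAt_zero hz),
      sliceAt_zero_leadingOrder g h hz, sliceAt_one_leadingOrder g h hz]
    simp

/-- The quartic with derivative `p₀ + p₁ s + p₂ s² + p₃ s³` that vanishes at `0`. -/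
def quartic (p₀ p₁ p₂ p₃ : ℝ) : ℝ[X] :=
  C p₀ * X + C (p₁ / 2) * X ^ 2 + C (p₂ / 3) * X ^ 3 + C (p₃ / 4) * X ^ 4

lemma eval_quartic (p₀ p₁ p₂ p₃ s : ℝ) :
    (quartic p₀ p₁ p₂ p₃).eval s = p₀ * s + p₁ / 2 * s ^ 2 + p₂ / 3 * s ^ 3 + p₃ / 4 * s ^ 4 := by
  simp [quartic]

lemma eval_derivative_quartic (p₀ p₁ p₂ p₃ s : ℝ) :
    (derivative (quartic p₀ p₁ p₂ p₃)).eval s = p₀ + p₁ * s + p₂ * s ^ 2 + p₃ * s ^ 3 := by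
  simp [quartic]
  ring

section QuarticMoments

variable (g h p₀ p₁ p₂ p₃ : ℝ)

lemma moment_legendre_two_quartic :
    moment 0 (3 * X ^ 2 - 1) (polyEval (quartic p₀ p₁ p₂ p₃) (leadingOrder g h)) =
      8 / 15 * (3 * h * p₀ + p₁ / 2 * (g ^ 2 + 54 / 7 * h ^ 2) +
        p₂ / 3 * (54 / 7 * g ^ 2 * h + 135 / 7 * h ^ 3) +
        p₃ / 4 * (6 / 7 * g ^ 4 + 270 / 7 * g ^ 2 * h ^ 2 + 540 / 11 * h ^ 4)) := by
  rw [moment_zero_polyEval_leadingOrder]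
  simp only [eval_quartic, eval_sub, eval_mul, eval_pow, eval_X, eval_one, eval_ofNat]
  ring_nf
  simp (disch := exact Continuous.intervalIntegrable (by fun_prop) _ _) only
    [intervalIntegral.integral_add, intervalIntegral.integral_sub, intervalIntegral.integral_neg,
    intervalIntegral.integral_mul_const, integral_pow]
  norm_num
  ring

lemma moment_one_quartic :
    moment 1 1 (polyEval (quartic p₀ p₁ p₂ p₃) (leadingOrder g h)) =
      16 / 15 * (p₀ + p₁ * (3 / 7 * h) + p₂ * (1 / 7 * g ^ 2 + 3 / 7 * h ^ 2) +
        p₃ * (3 / 7 * g ^ 2 * h + 45 / 77 * h ^ 3)) := by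
  rw [moment_one_polyEval_leadingOrder]
  simp only [eval_derivative_quartic, eval_one]
  ring_nf
  simp (disch := exact Continuous.intervalIntegrable (by fun_prop) _ _) only
    [intervalIntegral.integral_add, intervalIntegral.integral_sub,
    intervalIntegral.integral_mul_const, integral_pow]
  norm_num
  ring

lemma moment_gegenbauer_two_quartic :
    moment 1 (7 * X ^ 2 - 1) (polyEval (quartic p₀ p₁ p₂ p₃) (leadingOrder g h)) =
      64 / 105 * h * p₁ + (64 / 315 * g ^ 2 + 384 / 385 * h ^ 2) * p₂ +
        (384 / 385 * g ^ 2 * h + 1728 / 1001 * h ^ 3) * p₃ := by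
  rw [moment_one_polyEval_leadingOrder]
  simp only [eval_derivative_quartic, eval_sub, eval_mul, eval_pow, eval_X, eval_one, eval_ofNat]
  ring_nf
  simp (disch := exact Continuous.intervalIntegrable (by fun_prop) _ _) only
    [intervalIntegral.integral_add, intervalIntegral.integral_sub, intervalIntegral.integral_neg,
    intervalIntegral.integral_mul_const, integral_pow]
  norm_num
  ring

lemma moment_gegenbauer_four_quartic :
    moment 1 (33 * X ^ 4 - 18 * X ^ 2 + 1) (polyEval (quartic p₀ p₁ p₂ p₃) (leadingOrder g h)) =
      2048 / 5005 * h ^ 2 * p₂ + (2048 / 5005 * g ^ 2 * h + 6144 / 5005 * h ^ 3) * p₃ := by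
  rw [moment_one_polyEval_leadingOrder]
  simp only [eval_derivative_quartic, eval_add, eval_sub, eval_mul, eval_pow, eval_X, eval_one,
    eval_ofNat]
  ring_nf
  simp (disch := exact Continuous.intervalIntegrable (by fun_prop) _ _) only
    [intervalIntegral.integral_add, intervalIntegral.integral_sub,
    intervalIntegral.integral_mul_const, integral_pow]
  norm_num
  ring

end QuarticMoments

/- The moments with `z`-weights `1`, `7z² - 1`, `33z⁴ - 18z² + 1` form a triangular system for
`p₀, p₁, p₂`, solved here in terms of `p₃ = h²`. -/
lemma exists_quartic_moment_legendre_two_ne_zero (g : ℝ) {h : ℝ} (hh : h ≠ 0) :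
    ∃ G : ℝ[X], moment 0 (3 * X ^ 2 - 1) (polyEval G (leadingOrder g h)) ≠ 0 ∧
      moment 1 1 (polyEval G (leadingOrder g h)) = 0 ∧
      moment 1 (7 * X ^ 2 - 1) (polyEval G (leadingOrder g h)) = 0 ∧
      moment 1 (33 * X ^ 4 - 18 * X ^ 2 + 1) (polyEval G (leadingOrder g h)) = 0 := by
  let p₁ := (g ^ 2 / 3 + 18 / 11 * h ^ 2) * (g ^ 2 + 3 * h ^ 2)
    - (18 / 11 * g ^ 2 + 405 / 143 * h ^ 2) * h ^ 2
  let p₂ := -(g ^ 2 * h + 3 * h ^ 3)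
  let p₀ := -(p₁ * (3 / 7 * h) + p₂ * (1 / 7 * g ^ 2 + 3 / 7 * h ^ 2) +
    h ^ 2 * (3 / 7 * g ^ 2 * h + 45 / 77 * h ^ 3))
  refine ⟨quartic p₀ p₁ p₂ (h ^ 2), ?_, ?_, ?_, ?_⟩
  · have hpos (a b : ℝ) (ha : 0 ≤ a) (hb : 0 < b) :
        0 < a ^ 3 - 24 / 7 * a ^ 2 * b + 216 / 91 * a * b ^ 2
          + 2592 / 1001 * b ^ 3 := by
      have h₁ : 0 ≤ (a + 0.311 * b) * (a - 1.87 * b) ^ 2 := by positivity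
      have h₂ : 0 < b ^ 3 := by positivity
      have h₃ : 0 ≤ a * b ^ 2 := by positivity
      nlinarith
    refine (lt_of_lt_of_eq (mul_pos (by norm_num : (0 : ℝ) < 4 / 45)
      (hpos (g ^ 2) (h ^ 2) (sq_nonneg g) (by positivity))) ?_).ne'
    rw [moment_legendre_two_quartic]
    simp only [p₀, p₁, p₂]
    ring
  · rw [moment_one_quartic]
    simp only [p₀]
    ring
  · rw [moment_gegenbauer_two_quartic]
    simp only [p₁, p₂]
    ring
  · rw [moment_gegenbauer_four_quartic]
    simp only [p₂]
    ring

lemma exists_polynomial_moments {g h : ℝ} (hgh : g ≠ 0 ∨ h ≠ 0) (s₀ s₁ s₄ : ℝ) {s₆ : ℝ}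
    (hs₆ : h = 0 → s₆ = 0) :
    ∃ G : ℝ[X], moment 0 (3 * X ^ 2 - 1) (polyEval G (leadingOrder g h)) = s₀ ∧
      moment 1 1 (polyEval G (leadingOrder g h)) = s₁ ∧
      moment 1 (7 * X ^ 2 - 1) (polyEval G (leadingOrder g h)) = s₄ ∧
      moment 1 (33 * X ^ 4 - 18 * X ^ 2 + 1) (polyEval G (leadingOrder g h)) = s₆ := by
  rcases eq_or_ne h 0 with rfl | hh
  · have hg : g ≠ 0 := by simpa using hgh
    let p₂ := 315 * s₄ / (64 * g ^ 2)
    refine ⟨quartic (15 / 16 * s₁ - p₂ * (1 / 7 * g ^ 2)) (15 / 4 * s₀ / g ^ 2) p₂ 0,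
      ?_, ?_, ?_, ?_⟩
    · rw [moment_legendre_two_quartic]
      field_simp
      ring
    · rw [moment_one_quartic]
      ring
    · rw [moment_gegenbauer_two_quartic]
      simp only [p₂]
      field_simp
      ring
    · rw [moment_gegenbauer_four_quartic, hs₆ rfl]
      ring
  · obtain ⟨V, hV₀, hV₁, hV₄, hV₆⟩ := exists_quartic_moment_legendre_two_ne_zero g hh
    let p₂ := 5005 / 2048 * s₆ / h ^ 2
    let p₁ := 105 / 64 * (s₄ - (64 / 315 * g ^ 2 + 384 / 385 * h ^ 2) * p₂) / h
    let U := quartic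
      (15 / 16 * s₁ - p₁ * (3 / 7 * h) - p₂ * (1 / 7 * g ^ 2 + 3 / 7 * h ^ 2)) p₁ p₂ 0
    let c := (s₀ - moment 0 (3 * X ^ 2 - 1) (polyEval U (leadingOrder g h))) /
      moment 0 (3 * X ^ 2 - 1) (polyEval V (leadingOrder g h))
    refine ⟨U + c • V, ?_, ?_, ?_, ?_⟩ <;>
      simp only [polyEval_add, polyEval_smul, map_add, map_smul, smul_eq_mul]
    · simp only [c]
      field_simp
      ring
    · rw [hV₁, moment_one_quartic]
      ring
    · rw [hV₄, moment_gegenbauer_two_quartic]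
      simp only [p₁]
      field_simp
      ring
    · rw [hV₆, moment_gegenbauer_four_quartic]
      simp only [p₂]
      field_simp
      ring

lemma exists_polynomial_resonance {g h : ℝ} (hgh : g ≠ 0 ∨ h ≠ 0) (r : ℝ × ℝ) (s₄ : ℝ) {s₆ : ℝ}
    (hs₆ : h = 0 → s₆ = 0) :
    ∃ G : ℝ[X], resonance (polyEval G (leadingOrder g h)) = r ∧
      moment 1 (7 * X ^ 2 - 1) (polyEval G (leadingOrder g h)) = s₄ ∧
      moment 1 (33 * X ^ 4 - 18 * X ^ 2 + 1) (polyEval G (leadingOrder g h)) = s₆ := by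
  obtain ⟨G, h₀, h₁, h₄, h₆⟩ := exists_polynomial_moments hgh (r.1 / 120) (r.2 / 60) s₄ hs₆
  refine ⟨G, ?_, h₄, h₆⟩
  rw [resonance_eq, h₀, h₁]
  ext
  · ring
  · ring

end RossbyHaurwitz

section IteratedDerivative

open Polynomial

lemma iteratedDeriv_polynomial_eval (p : ℝ[X]) (d : ℕ) :
    iteratedDeriv d (fun x => p.eval x) = fun x => (derivative^[d] p).eval x := by
  induction d with
  | zero => simp
  | succ d ih =>
    ext x
    rw [iteratedDeriv_succ, ih, Polynomial.deriv, Function.iterate_succ_apply']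

end IteratedDerivative

lemma sqrt_factorial_div_mul_descFactorial_le {n m : ℕ} (hm : m ≤ n) :
    √((n - m).factorial / (n + m).factorial : ℝ) * (2 * n).descFactorial (n + m) ≤
      4 ^ n * n.factorial := by
  have hfact : ((n - m).factorial * (2 * n).descFactorial (n + m) : ℝ) = (2 * n).factorial := by
    rw [← Nat.factorial_mul_descFactorial (show n + m ≤ 2 * n by omega),
      show 2 * n - (n + m) = n - m by omega, Nat.cast_mul]
  have hchoose : ((2 * n).factorial : ℝ) =
      (2 * n).choose (n + m) * ((n + m).factorial * (n - m).factorial) := by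
    rw [← Nat.choose_mul_factorial_mul_factorial (show n + m ≤ 2 * n by omega),
      show 2 * n - (n + m) = n - m by omega, Nat.cast_mul, Nat.cast_mul, mul_assoc]
  have hcentral : ((2 * n).factorial : ℝ) = n.centralBinom * (n.factorial * n.factorial) := by
    rw [← Nat.choose_mul_factorial_mul_factorial (show n ≤ 2 * n by omega),
      show 2 * n - n = n by omega, Nat.cast_mul, Nat.cast_mul, mul_assoc,
      Nat.centralBinom_eq_two_mul_choose]
  have hpos : (0 : ℝ) < (n - m).factorial * (n + m).factorial := by positivity
  refine le_of_sq_le_sq ?_ (by positivity)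
  rw [mul_pow, Real.sq_sqrt (by positivity)]
  calc ((n - m).factorial / (n + m).factorial * ((2 * n).descFactorial (n + m)) ^ 2 : ℝ)
      = ((n - m).factorial * (2 * n).descFactorial (n + m)) ^ 2 /
          ((n - m).factorial * (n + m).factorial) := by field_simp
    _ = (2 * n).factorial * (2 * n).choose (n + m) := by
        rw [hfact, div_eq_iff hpos.ne', sq]
        nth_rw 2 [hchoose]
        ring
    _ ≤ (2 * n).factorial * n.centralBinom := by
        gcongr
        exact Nat.choose_le_centralBinom _ _
    _ = (n.centralBinom * n.factorial) ^ 2 := by rw [hcentral]; ring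
    _ ≤ (4 ^ n * n.factorial) ^ 2 := by
        gcongr
        exact_mod_cast Nat.centralBinom_le_four_pow n

namespace RossbyHaurwitz

open Polynomial Real

/-- The `d`-th derivative of `(X² - 1)^n`. By Rodrigues' formula `rodrigues n (n + m)` is, up to
a constant, the polynomial factor of the associated Legendre function `P_n^m`. -/
def rodrigues (n d : ℕ) : ℝ[X] := derivative^[d] ((X ^ 2 - 1) ^ n)

/-- The constant in front of `Y_n^m` once the factor `(2^n n!)⁻¹` of Rodrigues' formula has been
absorbed. -/
def normConst (n : ℕ) (m : ℤ) : ℝ :=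
  (if m = 0 then 1 else √2) *
    √((2 * n + 1) / (4 * π) * ((n - m.natAbs).factorial / (n + m.natAbs).factorial)) *
    (1 / (2 ^ n * n.factorial))

/-- The longitudinal factor of `Y_n^m`. -/
def azimuth (m : ℤ) (φ : ℝ) : ℝ := if m < 0 then sin (m.natAbs * φ) else cos (m.natAbs * φ)

/-- The spherical harmonic `Y_n^m` in a form that is smooth in `θ ∈ ℝ`; the powers
`(1 - cos² θ)^{m/2}` of `Ynm` are replaced by `sin^m θ`, so the two agree for `θ ∈ [0, π]`. -/
def harmonic (n : ℕ) (m : ℤ) : SphereFun := fun θ φ =>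
  normConst n m * (sin θ ^ m.natAbs * (rodrigues n (n + m.natAbs)).eval (cos θ)) * azimuth m φ

lemma legP_eq_rodrigues (n : ℕ) (x : ℝ) :
    legP n x = 1 / (2 ^ n * n.factorial) * (rodrigues n n).eval x := by
  have hR : (fun x : ℝ => (x ^ 2 - 1) ^ n) = fun x => ((X ^ 2 - 1 : ℝ[X]) ^ n).eval x := by
    ext x
    simp
  rw [legP, hR, iteratedDeriv_polynomial_eval, rodrigues]

lemma iteratedDeriv_legP (n m : ℕ) (x : ℝ) :
    iteratedDeriv m (legP n) x = 1 / (2 ^ n * n.factorial) * (rodrigues n (n + m)).eval x := by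
  have hP : legP n = fun x => (C (1 / (2 ^ n * n.factorial : ℝ)) * rodrigues n n).eval x := by
    ext x
    rw [eval_C_mul, legP_eq_rodrigues]
  rw [hP, iteratedDeriv_polynomial_eval]
  simp only [iterate_derivative_C_mul, eval_C_mul, rodrigues]
  rw [← Function.iterate_add_apply, add_comm m n]

lemma assocLegP_cos (n m : ℕ) {θ : ℝ} (hθ : θ ∈ Set.Icc 0 π) :
    assocLegP n m (cos θ) = (-1) ^ m * (1 / (2 ^ n * n.factorial)) *
      (sin θ ^ m * (rodrigues n (n + m)).eval (cos θ)) := by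
  have hsin : 0 ≤ sin θ := sin_nonneg_of_mem_Icc hθ
  have hpow : (1 - cos θ ^ 2) ^ ((m : ℝ) / 2) = sin θ ^ m := by
    rw [← sin_sq, ← rpow_natCast (sin θ) 2, ← rpow_mul hsin, ← rpow_natCast (sin θ) m]
    congr 1
    push_cast
    ring
  rw [assocLegP, iteratedDeriv_legP, hpow]
  ring

lemma Ynm_eq_harmonic (n : ℕ) (m : ℤ) {θ : ℝ} (hθ : θ ∈ Set.Icc 0 π) (φ : ℝ) :
    Ynm n m θ φ = harmonic n m θ φ := by
  have hsign (k : ℕ) : (-1 : ℝ) ^ k * (-1) ^ k = 1 := by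
    rw [← mul_pow]
    norm_num
  rcases lt_trichotomy m 0 with hm | rfl | hm
  · rw [Ynm, harmonic, normConst, azimuth, if_neg hm.ne, if_neg hm.not_gt, if_neg hm.ne, if_pos hm,
      assocLegP_cos _ _ hθ]
    linear_combination (√2 * √((2 * n + 1) / (4 * π) *
      ((n - m.natAbs).factorial / (n + m.natAbs).factorial)) * (1 / (2 ^ n * n.factorial)) *
      (sin θ ^ m.natAbs * (rodrigues n (n + m.natAbs)).eval (cos θ)) * sin (m.natAbs * φ)) *
      hsign m.natAbs
  · have hn : (n.factorial : ℝ) ≠ 0 := by positivity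
    simp only [Ynm, harmonic, normConst, azimuth, legP_eq_rodrigues, if_true, lt_irrefl, if_false,
      Int.natAbs_zero, Nat.sub_zero, Nat.add_zero, div_self hn, mul_one, one_mul, Nat.cast_zero,
      zero_mul, cos_zero, pow_zero]
    ring
  · rw [Ynm, harmonic, normConst, azimuth, if_neg hm.ne', if_pos hm, if_neg hm.ne',
      if_neg hm.not_gt, assocLegP_cos _ _ hθ]
    linear_combination (√2 * √((2 * n + 1) / (4 * π) *
      ((n - m.natAbs).factorial / (n + m.natAbs).factorial)) * (1 / (2 ^ n * n.factorial)) *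
      (sin θ ^ m.natAbs * (rodrigues n (n + m.natAbs)).eval (cos θ)) * cos (m.natAbs * φ)) *
      hsign m.natAbs

lemma continuous_harmonic (n : ℕ) (m : ℤ) : Continuous (Function.uncurry (harmonic n m)) := by
  have hazimuth : Continuous (azimuth m) := by
    unfold azimuth
    split_ifs <;> fun_prop
  unfold harmonic Function.uncurry
  fun_prop

lemma rodrigues_eq_sum (n d : ℕ) :
    rodrigues n d = ∑ i ∈ Finset.range (n + 1), C ((-1) ^ (n - i) * (n.choose i : ℝ)) *
      (C ((2 * i).descFactorial d : ℝ) * X ^ (2 * i - d)) := by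
  rw [rodrigues, sub_eq_add_neg, add_pow, iterate_derivative_sum]
  refine Finset.sum_congr rfl fun i _ => ?_
  have hterm : (X ^ 2) ^ i * (-1) ^ (n - i) * (n.choose i : ℝ[X]) =
      C ((-1) ^ (n - i) * (n.choose i : ℝ)) * X ^ (2 * i) := by
    simp only [← pow_mul, map_mul, map_pow, map_neg, map_one, map_natCast]
    ring
  rw [hterm, iterate_derivative_C_mul, iterate_derivative_X_pow_eq_C_mul]

lemma abs_eval_rodrigues_le (n d : ℕ) {x : ℝ} (hx : |x| ≤ 1) :
    |(rodrigues n d).eval x| ≤ 2 ^ n * (2 * n).descFactorial d := by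
  rw [rodrigues_eq_sum, eval_finsetSum,
    show (2 : ℝ) ^ n = ∑ i ∈ Finset.range (n + 1), (n.choose i : ℝ) from
      mod_cast (Nat.sum_range_choose n).symm, Finset.sum_mul]
  refine (Finset.abs_sum_le_sum_abs _ _).trans (Finset.sum_le_sum fun i hi => ?_)
  simp only [eval_mul, eval_C, eval_pow, eval_X, abs_mul, abs_pow, abs_neg, abs_one, one_pow,
    one_mul, Nat.abs_cast]
  have hin : i ≤ n := Finset.mem_range_succ_iff.1 hi
  have hdesc : ((2 * i).descFactorial d : ℝ) ≤ (2 * n).descFactorial d :=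
    mod_cast Nat.descFactorial_le d (by omega)
  gcongr
  exact (mul_le_of_le_one_right (by positivity) (pow_le_one₀ (abs_nonneg x) hx)).trans hdesc

lemma normConst_pos (n : ℕ) (m : ℤ) : 0 < normConst n m := by
  unfold normConst
  split_ifs <;> positivity

lemma normConst_le (n : ℕ) (m : ℤ) :
    normConst n m ≤ (2 * n + 1) * √((n - m.natAbs).factorial / (n + m.natAbs).factorial) *
      (1 / (2 ^ n * n.factorial)) := by
  have hfactor : (if m = 0 then 1 else √2) ≤ √2 := by
    split_ifs
    · exact one_le_sqrt.2 one_le_two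
    · exact le_rfl
  have hsqrt : √2 * √((2 * n + 1) / (4 * π)) ≤ 2 * n + 1 := by
    rw [← sqrt_mul zero_le_two, sqrt_le_iff]
    refine ⟨by positivity, ?_⟩
    rw [mul_div_assoc', div_le_iff₀ (by positivity)]
    nlinarith [pi_gt_three, (n.cast_nonneg : (0 : ℝ) ≤ n)]
  rw [normConst, sqrt_mul (by positivity), ← mul_assoc]
  gcongr
  exact (mul_le_mul_of_nonneg_right hfactor (sqrt_nonneg _)).trans hsqrt

lemma abs_harmonic_le {n : ℕ} {m : ℤ} (hm : |m| ≤ n) (θ φ : ℝ) :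
    |harmonic n m θ φ| ≤ (2 * n + 1) * 4 ^ n := by
  have hmn : m.natAbs ≤ n := by
    rwa [Int.abs_eq_natAbs, Nat.cast_le] at hm
  have hazimuth : |azimuth m φ| ≤ 1 := by
    unfold azimuth
    split_ifs
    exacts [abs_sin_le_one _, abs_cos_le_one _]
  have hsin : |sin θ ^ m.natAbs| ≤ 1 := by
    rw [abs_pow]
    exact pow_le_one₀ (abs_nonneg _) (abs_sin_le_one θ)
  have hR := abs_eval_rodrigues_le n (n + m.natAbs) (abs_cos_le_one θ)
  rw [harmonic, abs_mul, abs_mul, abs_mul, abs_of_pos (normConst_pos n m)]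
  calc normConst n m * (|sin θ ^ m.natAbs| * |(rodrigues n (n + m.natAbs)).eval (cos θ)|)
        * |azimuth m φ|
      ≤ ((2 * n + 1) * √((n - m.natAbs).factorial / (n + m.natAbs).factorial) *
          (1 / (2 ^ n * n.factorial))) * (1 * (2 ^ n * (2 * n).descFactorial (n + m.natAbs)))
          * 1 := by
        gcongr
        exact normConst_le n m
    _ = (2 * n + 1) * ((√((n - m.natAbs).factorial / (n + m.natAbs).factorial) *
          (2 * n).descFactorial (n + m.natAbs)) / n.factorial) := by
        field_simp
    _ ≤ (2 * n + 1) * 4 ^ n := by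
        gcongr
        rw [div_le_iff₀ (by positivity)]
        exact sqrt_factorial_div_mul_descFactorial_le hmn

lemma rodrigues_four_six : rodrigues 4 6 = C 2880 * (7 * X ^ 2 - 1) := by
  rw [rodrigues_eq_sum]
  norm_num [Finset.sum_range_succ, Nat.choose, Nat.descFactorial, C_ofNat]
  ring

lemma rodrigues_six_eight : rodrigues 6 8 = C 604800 * (33 * X ^ 4 - 18 * X ^ 2 + 1) := by
  rw [rodrigues_eq_sum]
  norm_num [Finset.sum_range_succ, Nat.choose, Nat.descFactorial, C_ofNat]
  ring

lemma Ynm_one_zero (θ φ : ℝ) : Ynm 1 0 θ φ = √(3 / (4 * π)) * cos θ := by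
  have hP : legP 1 (cos θ) = cos θ := by
    rw [legP_eq_rodrigues, rodrigues_eq_sum]
    norm_num [Finset.sum_range_succ, Nat.choose, Nat.descFactorial]
    ring
  rw [Ynm, if_pos rfl, hP]
  norm_num

lemma Ynm_two_zero (θ φ : ℝ) : Ynm 2 0 θ φ = √(5 / (4 * π)) * ((3 * cos θ ^ 2 - 1) / 2) := by
  have hP : legP 2 (cos θ) = (3 * cos θ ^ 2 - 1) / 2 := by
    rw [legP_eq_rodrigues, rodrigues_eq_sum]
    norm_num [Finset.sum_range_succ, Nat.choose, Nat.descFactorial]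
    ring
  rw [Ynm, if_pos rfl, hP]
  norm_num

end RossbyHaurwitz

section Orthogonality

open Polynomial Real

lemma integral_mul_iterate_derivative_eq_zero {q R : ℝ[X]} {a b N : ℕ} (hq : (X ^ 2 - 1) ^ a ∣ q)
    (hR : (X ^ 2 - 1) ^ b ∣ R) (hN : N ≤ a + b) (hdeg : q.natDegree < N) :
    ∫ x in (-1 : ℝ)..1, (q * derivative^[N] R).eval x = 0 := by
  induction N generalizing q a with
  | zero => omega
  | succ N ih =>
    have hparts := integral_derivative_eval (q * derivative^[N] R) (-1) 1
    rw [derivative_mul, ← Function.iterate_succ_apply' (f := derivative)] at hparts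
    simp only [eval_add] at hparts
    rw [intervalIntegral.integral_add ((Polynomial.continuous _).intervalIntegrable _ _)
      ((Polynomial.continuous _).intervalIntegrable _ _)] at hparts
    have hboundary {x : ℝ} (hx : x ^ 2 - 1 = 0) : (q * derivative^[N] R).eval x = 0 := by
      have hdvd : X ^ 2 - 1 ∣ q * derivative^[N] R := by
        rcases Nat.eq_zero_or_pos a with rfl | ha
        · exact ((dvd_pow_self _ (by omega)).trans
            (pow_sub_dvd_iterate_derivative_of_pow_dvd N hR)).mul_left _
        · exact ((dvd_pow_self _ ha.ne').trans hq).mul_right _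
      refine eval_eq_zero_of_dvd_of_eval_eq_zero hdvd ?_
      simpa using hx
    have hderiv : ∫ x in (-1 : ℝ)..1, (derivative q * derivative^[N] R).eval x = 0 := by
      rcases Nat.eq_zero_or_pos q.natDegree with hq₀ | hq₀
      · simp [derivative_of_natDegree_zero hq₀]
      · refine ih (a := a - 1) ?_ (by omega) ((natDegree_derivative_lt hq₀.ne').trans_le (by omega))
        exact pow_sub_one_dvd_derivative_of_pow_dvd hq
    rwa [hderiv, zero_add, hboundary (by norm_num), hboundary (by norm_num), sub_zero] at hparts

lemma integral_eq_zero_of_comp_two_pi_sub {f : ℝ → ℝ} (hf : ∀ φ, f (2 * π - φ) = -f φ) :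
    ∫ φ in (0 : ℝ)..2 * π, f φ = 0 := by
  have h := intervalIntegral.integral_comp_sub_left f (a := 0) (b := 2 * π) (2 * π)
  simp only [hf, intervalIntegral.integral_neg, sub_self, sub_zero] at h
  linarith

lemma integral_cos_two_mul_pow_mul_sin (k m : ℕ) :
    ∫ φ in (0 : ℝ)..2 * π, cos (2 * φ) ^ k * sin (m * φ) = 0 := by
  refine integral_eq_zero_of_comp_two_pi_sub fun φ => ?_
  have hcos : cos (2 * (2 * π - φ)) = cos (2 * φ) := by
    rw [mul_sub, show 2 * (2 * π) = (2 : ℕ) * (2 * π) by norm_num, cos_nat_mul_two_pi_sub]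
  rw [hcos, mul_sub, sin_nat_mul_two_pi_sub, mul_neg]

lemma integral_cos_two_mul_pow_mul_cos (k : ℕ) {m : ℤ} (hm : Odd m ∨ 2 * k < |m|) :
    ∫ φ in (0 : ℝ)..2 * π, cos (2 * φ) ^ k * cos (m * φ) = 0 := by
  induction k generalizing m with
  | zero =>
    have hm₀ : (m : ℝ) ≠ 0 := by
      rw [Int.cast_ne_zero]
      rintro rfl
      simp at hm
    have hsin : sin (m * (2 * π)) = 0 := by
      rw [← mul_assoc]
      exact_mod_cast sin_int_mul_pi (m * 2)
    simp only [pow_zero, one_mul]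
    rw [intervalIntegral.integral_comp_mul_left (fun x => cos x) hm₀, integral_cos, hsin]
    simp
  | succ k ih =>
    have hprod (φ : ℝ) : cos (2 * φ) ^ (k + 1) * cos (m * φ) =
        1 / 2 * (cos (2 * φ) ^ k * cos ((m + 2 : ℤ) * φ)) +
          1 / 2 * (cos (2 * φ) ^ k * cos ((m - 2 : ℤ) * φ)) := by
      push_cast
      rw [add_mul, sub_mul, cos_add, cos_sub]
      ring
    have hplus : Odd (m + 2) ∨ 2 * k < |m + 2| := by grind
    have hminus : Odd (m - 2) ∨ 2 * k < |m - 2| := by grind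
    simp only [hprod]
    rw [intervalIntegral.integral_add (Continuous.intervalIntegrable (by fun_prop) _ _)
        (Continuous.intervalIntegrable (by fun_prop) _ _), intervalIntegral.integral_const_mul,
      intervalIntegral.integral_const_mul, ih hplus, ih hminus, mul_zero, add_zero]

end Orthogonality

lemma clm_integral_integral_apply {E F : Type*} [NormedAddCommGroup E] [NormedSpace ℝ E]
    [NormedAddCommGroup F] [NormedSpace ℝ F] [CompleteSpace F] {f : ℝ → ℝ → E →L[ℝ] F}
    (hf : Continuous (Function.uncurry f)) (a b c d : ℝ) (v : E) :
    (∫ s in a..b, ∫ t in c..d, f s t) v = ∫ s in a..b, ∫ t in c..d, f s t v := by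
  have hinner := intervalIntegral.continuous_parametric_intervalIntegral_of_continuous'
    (μ := volume) hf c d
  rw [ContinuousLinearMap.intervalIntegral_apply (hinner.intervalIntegrable a b)]
  refine intervalIntegral.integral_congr fun s _ => ?_
  exact ContinuousLinearMap.intervalIntegral_apply
    ((hf.comp (Continuous.prodMk_right s)).intervalIntegrable c d) v

namespace RossbyHaurwitz

open Polynomial hiding coeff
open EllOne Real

/-- The coefficient of `toSphere a` in `Y_n^m` as a continuous linear functional of `a`. -/
def coeffCLM (n : ℕ) (m : ℤ) : PowerSeriesAlg →L[ℝ] ℝ :=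
  ∫ φ in (0 : ℝ)..2 * π, ∫ θ in (0 : ℝ)..π, (harmonic n m θ φ * sin θ) • sphEval θ φ

lemma coeffCLM_apply (n : ℕ) (m : ℤ) (a : PowerSeriesAlg) :
    coeffCLM n m a =
      ∫ φ in (0 : ℝ)..2 * π, ∫ θ in (0 : ℝ)..π, harmonic n m θ φ * sin θ * sphEval θ φ a := by
  have hY : Continuous fun p : ℝ × ℝ => harmonic n m p.2 p.1 :=
    (continuous_harmonic n m).comp₂ continuous_snd continuous_fst
  have hV : Continuous fun p : ℝ × ℝ => sphEval p.2 p.1 :=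
    contDiff_sphEval.continuous.comp₂ continuous_snd continuous_fst
  have hf : Continuous (Function.uncurry fun φ θ => (harmonic n m θ φ * sin θ) • sphEval θ φ) :=
    (hY.mul (continuous_sin.comp continuous_snd)).smul hV
  exact clm_integral_integral_apply hf 0 (2 * π) 0 π a

lemma coeff_toSphere (a : PowerSeriesAlg) (n : ℕ) (m : ℤ) :
    coeff (toSphere a) n m = coeffCLM n m a := by
  rw [coeffCLM_apply, coeff, sInner]
  refine intervalIntegral.integral_congr fun φ _ => intervalIntegral.integral_congr fun θ hθ => ?_
  rw [Set.uIcc_of_le pi_pos.le] at hθ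
  simp only [Ynm_eq_harmonic n m hθ φ, toSphere]
  ring

lemma coeffCLM_basisVec (n : ℕ) (m : ℤ) (j k : ℕ) :
    coeffCLM n m (basisVec (j, k)) =
      8⁻¹ ^ (j + 2 * k) * normConst n m * (∫ φ in (0 : ℝ)..2 * π, cos (2 * φ) ^ k * azimuth m φ) *
        ∫ θ in (0 : ℝ)..π, cos θ ^ j * sin θ ^ (2 * k + m.natAbs) *
          (rodrigues n (n + m.natAbs)).eval (cos θ) * sin θ := by
  rw [coeffCLM_apply, mul_assoc, mul_assoc, ← intervalIntegral.integral_mul_const,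
    ← intervalIntegral.integral_const_mul, ← intervalIntegral.integral_const_mul]
  refine intervalIntegral.integral_congr fun φ _ => ?_
  simp only [← intervalIntegral.integral_const_mul]
  refine intervalIntegral.integral_congr fun θ _ => ?_
  simp only [harmonic, sphEval_basisVec, saddle, mul_pow, ← pow_mul, pow_add]
  ring

lemma integral_azimuth_eq_zero {k : ℕ} {m : ℤ} (hm : m < 0 ∨ Odd m ∨ 2 * k < |m|) :
    ∫ φ in (0 : ℝ)..2 * π, cos (2 * φ) ^ k * azimuth m φ = 0 := by
  unfold azimuth
  rcases lt_or_ge m 0 with hneg | hpos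
  · simp only [if_pos hneg, integral_cos_two_mul_pow_mul_sin]
  · have hcast : ((m.natAbs : ℕ) : ℝ) = m := by
      rw [Nat.cast_natAbs, abs_of_nonneg hpos]
    simp only [if_neg hpos.not_gt, hcast]
    exact integral_cos_two_mul_pow_mul_cos k (hm.resolve_left hpos.not_gt)

lemma integral_cos_pow_mul_rodrigues (n j k μ : ℕ) :
    ∫ θ in (0 : ℝ)..π, cos θ ^ j * sin θ ^ (2 * k + 2 * μ) *
        (rodrigues n (n + 2 * μ)).eval (cos θ) * sin θ =
      ∫ x in (-1 : ℝ)..1, ((1 - X ^ 2) ^ (k + μ) * (rodrigues n (n + 2 * μ) * X ^ j)).eval x := by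
  rw [← integral_comp_cos_mul_sin (Polynomial.continuous _)]
  refine intervalIntegral.integral_congr fun θ _ => ?_
  simp only [eval_mul, eval_pow, eval_sub, eval_one, eval_X, ← sin_sq]
  ring

lemma coeffCLM_basisVec_eq_zero {n j k : ℕ} (m : ℤ) (hn : j + 2 * k < n) :
    coeffCLM n m (basisVec (j, k)) = 0 := by
  rw [coeffCLM_basisVec]
  by_cases hm : m < 0 ∨ Odd m ∨ 2 * k < |m|
  · rw [integral_azimuth_eq_zero hm, mul_zero, zero_mul]
  · obtain ⟨hpos, heven, hle⟩ : 0 ≤ m ∧ ¬Odd m ∧ |m| ≤ 2 * k := by push Not at hm; exact hm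
    obtain ⟨μ, hμ⟩ : ∃ μ, m.natAbs = 2 * μ := by
      obtain ⟨μ, rfl⟩ := Int.not_odd_iff_even.1 heven
      exact ⟨μ.natAbs, by omega⟩
    have hμk : μ ≤ k := by
      rw [Int.abs_eq_natAbs, hμ] at hle
      omega
    have hcomm : (1 - X ^ 2) ^ (k + μ) * (rodrigues n (n + 2 * μ) * X ^ j) =
        (1 - X ^ 2) ^ (k + μ) * X ^ j * derivative^[n + 2 * μ] ((X ^ 2 - 1 : ℝ[X]) ^ n) := by
      rw [rodrigues]
      ring
    have hdvd : (X ^ 2 - 1 : ℝ[X]) ^ (k + μ) ∣ (1 - X ^ 2) ^ (k + μ) * X ^ j :=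
      (pow_dvd_pow_of_dvd ⟨-1, by ring⟩ _).mul_right _
    have hdeg : ((1 - X ^ 2 : ℝ[X]) ^ (k + μ) * X ^ j).natDegree ≤ (k + μ) * 2 + j := by
      compute_degree
    rw [hμ, integral_cos_pow_mul_rodrigues, hcomm,
      integral_mul_iterate_derivative_eq_zero hdvd dvd_rfl (by omega) (by omega), mul_zero]

lemma abs_coeffCLM_basisVec_le {n : ℕ} {m : ℤ} (hm : |m| ≤ n) (i : ℕ × ℕ) :
    |coeffCLM n m (basisVec i)| ≤ 2 * π ^ 2 * ((2 * n + 1) * (1 / 2) ^ n) := by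
  obtain ⟨j, k⟩ := i
  rcases lt_or_ge (j + 2 * k) n with hn | hn
  · rw [coeffCLM_basisVec_eq_zero m hn, abs_zero]
    positivity
  have hpoint (θ φ : ℝ) : ‖harmonic n m θ φ * sin θ * sphEval θ φ (basisVec (j, k))‖ ≤
      (2 * n + 1) * (1 / 2) ^ n := by
    have hbasis : |sphEval θ φ (basisVec (j, k))| ≤ (1 / 8) ^ n := by
      rw [sphEval_basisVec, abs_mul, abs_mul, abs_pow, abs_pow, abs_pow]
      calc |(8⁻¹ : ℝ)| ^ (j + 2 * k) * (|cos θ| ^ j * |saddle θ φ| ^ k)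
          ≤ |(8⁻¹ : ℝ)| ^ (j + 2 * k) * (1 * 1) := by
            gcongr
            exacts [pow_le_one₀ (abs_nonneg _) (abs_cos_le_one θ),
              pow_le_one₀ (abs_nonneg _) (abs_saddle_le θ φ)]
        _ ≤ (1 / 8) ^ n := by
            rw [mul_one, mul_one, abs_of_pos (by norm_num), inv_eq_one_div]
            exact pow_le_pow_of_le_one (by norm_num) (by norm_num) hn
    rw [norm_mul, norm_mul, Real.norm_eq_abs, Real.norm_eq_abs, Real.norm_eq_abs]
    calc |harmonic n m θ φ| * |sin θ| * |sphEval θ φ (basisVec (j, k))|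
        ≤ (2 * n + 1) * 4 ^ n * 1 * (1 / 8) ^ n := by
          gcongr
          exacts [abs_harmonic_le hm θ φ, abs_sin_le_one θ]
      _ = (2 * n + 1) * (1 / 2) ^ n := by
          rw [mul_one, mul_assoc, ← mul_pow]
          norm_num
  have hinner (φ : ℝ) := intervalIntegral.norm_integral_le_of_norm_le_const
    (a := 0) (b := π) fun θ _ => hpoint θ φ
  have houter := intervalIntegral.norm_integral_le_of_norm_le_const
    (a := 0) (b := 2 * π) fun φ _ => hinner φ
  rw [sub_zero, sub_zero, abs_of_pos pi_pos, abs_of_pos two_pi_pos, ← coeffCLM_apply] at houter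
  exact houter.trans_eq (by ring)

lemma abs_coeff_toSphere_le {n : ℕ} {m : ℤ} (hm : |m| ≤ n) (a : PowerSeriesAlg) :
    |coeff (toSphere a) n m| ≤ 2 * π ^ 2 * ‖a‖ * ((2 * n + 1) * (1 / 2) ^ n) := by
  rw [coeff_toSphere]
  calc |coeffCLM n m a| ≤ 2 * π ^ 2 * ((2 * n + 1) * (1 / 2) ^ n) * ‖a‖ :=
        norm_clm_apply_le (f := coeffCLM n m) (abs_coeffCLM_basisVec_le hm) a
    _ = 2 * π ^ 2 * ‖a‖ * ((2 * n + 1) * (1 / 2) ^ n) := by ring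

lemma integral_cos_two_mul_sq : ∫ φ in (0 : ℝ)..2 * π, cos (2 * φ) ^ 2 = π := by
  rw [intervalIntegral.integral_comp_mul_left (fun x => cos x ^ 2) two_ne_zero, integral_cos_sq]
  have hsin : sin (2 * (2 * π)) = 0 := by
    rw [show 2 * (2 * π) = (4 : ℕ) * π by push_cast; ring, sin_nat_mul_pi]
  rw [hsin]
  simp

/-- The coefficient of `Y_n^2` in the part of `toSphere a` that is linear in `u`. -/
def linearCoeff (n : ℕ) : PowerSeriesAlg →L[ℝ] ℝ :=
  (π * normConst n 2) • moment 1 (rodrigues n (n + 2))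

lemma coeffCLM_two_basisVec_zero (n j : ℕ) : coeffCLM n 2 (basisVec (j, 0)) = 0 := by
  rw [coeffCLM_basisVec, integral_azimuth_eq_zero (by norm_num), mul_zero, zero_mul]

lemma coeffCLM_two_basisVec_one (n j : ℕ) :
    coeffCLM n 2 (basisVec (j, 1)) = linearCoeff n (basisVec (j, 1)) := by
  have hazimuth : ∫ φ in (0 : ℝ)..2 * π, cos (2 * φ) ^ 1 * azimuth 2 φ = π := by
    refine (intervalIntegral.integral_congr fun φ _ => ?_).trans integral_cos_two_mul_sq
    norm_num [azimuth, sq]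
  have hθ := integral_cos_pow_mul_rodrigues n j 1 1
  rw [coeffCLM_basisVec, hazimuth, linearCoeff, smul_apply, moment_basisVec, if_pos rfl,
    smul_eq_mul, show (2 : ℤ).natAbs = 2 * 1 from rfl, hθ]
  ring

lemma abs_coeffCLM_two_scale_sub_le (n : ℕ) {ε : ℝ} (hε : |ε| ≤ 1) (a : PowerSeriesAlg) :
    |coeffCLM n 2 (scale ε hε a) - ε * linearCoeff n a| ≤ ‖coeffCLM n 2‖ * ‖a‖ * ε ^ 2 := by
  have hbasis (i : ℕ × ℕ) :
      ‖((coeffCLM n 2).comp (scale ε hε) - ε • linearCoeff n) (basisVec i)‖ ≤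
        ‖coeffCLM n 2‖ * ε ^ 2 := by
    obtain ⟨j, l⟩ := i
    rw [sub_apply, smul_apply, ContinuousLinearMap.comp_apply, scale_basisVec, map_smul]
    obtain rfl | rfl | hl : l = 0 ∨ l = 1 ∨ 2 ≤ l := by omega
    · rw [coeffCLM_two_basisVec_zero, linearCoeff, smul_apply, moment_basisVec, if_neg (by simp)]
      simp only [smul_zero, sub_zero, norm_zero]
      positivity
    · rw [coeffCLM_two_basisVec_one, pow_one, sub_self, norm_zero]
      positivity
    · rw [linearCoeff, smul_apply, moment_basisVec, if_neg (by omega), smul_zero, smul_zero,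
        sub_zero, norm_smul, norm_pow, mul_comm, ← sq_abs ε]
      have hpow := pow_le_pow_of_le_one (abs_nonneg ε) hε hl
      have hop := (coeffCLM n 2).le_opNorm (basisVec (j, l))
      rw [norm_basisVec, mul_one] at hop
      exact mul_le_mul hop hpow (by positivity) (by positivity)
  calc |coeffCLM n 2 (scale ε hε a) - ε * linearCoeff n a| ≤ ‖coeffCLM n 2‖ * ε ^ 2 * ‖a‖ :=
        norm_clm_apply_le hbasis a
    _ = ‖coeffCLM n 2‖ * ‖a‖ * ε ^ 2 := by ring

end RossbyHaurwitz

namespace RossbyHaurwitz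

lemma muSp_nonneg (n : ℕ) : 0 ≤ muSp n := by
  unfold muSp
  positivity

lemma sobNormSq_le_tsum (k : ℕ) {u : SphereFun} {w : ℕ → ℝ}
    (hu : ∀ (n : ℕ) (m : ℤ), |m| ≤ n → |coeff u n m| ≤ w n) :
    sobNormSq k u ≤ ∑' n : ℕ, ENNReal.ofReal ((2 * n + 1) * (muSp n ^ k * w n ^ 2)) := by
  refine (ENNReal.tsum_prod (f := fun (n : ℕ) (m : ℤ) => if |m| ≤ (n : ℤ) then
    ENNReal.ofReal (muSp n ^ k * coeff u n m ^ 2) else 0)).trans_le ?_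
  refine ENNReal.tsum_le_tsum fun n => ?_
  rw [tsum_eq_sum (s := Finset.Icc (-n : ℤ) n)
    fun m hm => if_neg fun h => hm (Finset.mem_Icc.2 (abs_le.1 h))]
  refine (Finset.sum_le_card_nsmul _ _ (ENNReal.ofReal (muSp n ^ k * w n ^ 2))
    fun m hm => ?_).trans_eq ?_
  · have hmn : |m| ≤ n := abs_le.2 (Finset.mem_Icc.1 hm)
    rw [if_pos hmn, ← sq_abs (coeff u n m)]
    have hμ := muSp_nonneg n
    gcongr
    exact hu n m hmn
  · have hcard : (Finset.Icc (-n : ℤ) n).card = 2 * n + 1 := by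
      rw [Int.card_Icc]
      omega
    rw [hcard, ← ENNReal.ofReal_nsmul, nsmul_eq_mul]
    push_cast
    rfl

lemma summable_sobolev_weight (k : ℕ) :
    Summable fun n : ℕ => (2 * n + 1) * (muSp n ^ k * ((2 * n + 1) * (1 / 2 : ℝ) ^ n) ^ 2) := by
  have hgeom := (summable_nat_add_iff 1).2
    (summable_pow_mul_geometric_of_norm_lt_one (2 * k + 3) (r := (1 / 4 : ℝ)) (by norm_num))
  refine (hgeom.mul_left 32).of_nonneg_of_le (fun n => ?_) fun n => ?_
  · have := muSp_nonneg n
    positivity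
  · have hμ₀ := muSp_nonneg n
    have hμ : muSp n ≤ (n + 1) ^ 2 := by
      unfold muSp
      nlinarith [Nat.cast_nonneg (α := ℝ) n]
    calc (2 * n + 1) * (muSp n ^ k * ((2 * n + 1) * (1 / 2 : ℝ) ^ n) ^ 2)
        ≤ (2 * (n + 1)) * (((n + 1) ^ 2) ^ k * ((2 * (n + 1)) * (1 / 2 : ℝ) ^ n) ^ 2) := by
          gcongr <;> linarith
      _ = 32 * (((n + 1 : ℕ) : ℝ) ^ (2 * k + 3) * (1 / 4 : ℝ) ^ (n + 1)) := by
          rw [← pow_mul, mul_pow, ← pow_mul, mul_comm n, pow_mul (1 / 2 : ℝ), pow_succ (1 / 4 : ℝ)]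
          push_cast
          ring

lemma exists_sobNormSq_le (k : ℕ) :
    ∃ C : ℝ, 0 ≤ C ∧ ∀ (u : SphereFun) (K : ℝ),
      (∀ (n : ℕ) (m : ℤ), |m| ≤ n → |coeff u n m| ≤ K * ((2 * n + 1) * (1 / 2) ^ n)) →
        sobNormSq k u ≤ ENNReal.ofReal ((C * K) ^ 2) := by
  set weight := fun n : ℕ => (2 * n + 1) * (muSp n ^ k * ((2 * n + 1) * (1 / 2 : ℝ) ^ n) ^ 2)
  have hweight (n : ℕ) : 0 ≤ weight n := by
    have := muSp_nonneg n
    positivity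
  refine ⟨√(∑' n, weight n), Real.sqrt_nonneg _, fun u K hu => ?_⟩
  calc sobNormSq k u ≤ ∑' n, ENNReal.ofReal (K ^ 2 * weight n) := by
        refine (sobNormSq_le_tsum k hu).trans_eq (tsum_congr fun n => ?_)
        congr 1
        ring
    _ = ENNReal.ofReal (∑' n, K ^ 2 * weight n) :=
        (ENNReal.ofReal_tsum_of_nonneg (fun n => mul_nonneg (sq_nonneg K) (hweight n))
          ((summable_sobolev_weight k).mul_left _)).symm
    _ = ENNReal.ofReal ((√(∑' n, weight n) * K) ^ 2) := by
        rw [tsum_mul_left, mul_pow, Real.sq_sqrt (tsum_nonneg hweight), mul_comm]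

lemma exists_sobNormSq_toSphere_le (k : ℕ) :
    ∃ C : ℝ, 0 ≤ C ∧ ∀ a, sobNormSq k (toSphere a) ≤ ENNReal.ofReal ((C * ‖a‖) ^ 2) := by
  obtain ⟨C, hC, hsob⟩ := exists_sobNormSq_le k
  refine ⟨C * (2 * Real.pi ^ 2), by positivity, fun a => ?_⟩
  rw [mul_assoc]
  exact hsob _ _ fun n m hm => abs_coeff_toSphere_le hm a

end RossbyHaurwitz

namespace RossbyHaurwitz

open Polynomial hiding coeff
open EllOne Real Filter Asymptotics Topology

/-- The array that represents the zonal Rossby–Haurwitz state `g z + h (3z² - 1)`. -/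
def background (g h : ℝ) : PowerSeriesAlg := zonalPart g h - h • monomial 0 0

/-- The array that represents `g z + h (3z² - 1) + ε (u + w)`, where the correction `w` is given
by the array `W` after the substitution `u ↦ ε u`. -/
def perturbed (g h : ℝ) {ε : ℝ} (hε : |ε| ≤ 1) (W : PowerSeriesAlg) : PowerSeriesAlg :=
  background g h + ε • (monomial 0 1 + scale ε hε W)

lemma sphEval_monomial (j k : ℕ) (θ φ : ℝ) :
    sphEval θ φ (monomial j k) = cos θ ^ j * saddle θ φ ^ k :=
  congrFun₂ (toSphere_monomial j k) θ φ

lemma norm_monomial (j k : ℕ) : ‖monomial j k‖ = 8 ^ (j + 2 * k) := by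
  rw [monomial, norm_smul, norm_basisVec, mul_one, norm_pow, Real.norm_ofNat]

lemma toSphere_background (β γ : ℝ) :
    toSphere (background (γ * √(3 / (4 * π))) (β * √(5 / (4 * π)) / 2)) =
      fun θ φ => β * Ynm 2 0 θ φ + γ * Ynm 1 0 θ φ := by
  ext θ φ
  simp only [toSphere, background, zonalPart, map_sub, map_add, map_smul, sphEval_monomial,
    Ynm_one_zero, Ynm_two_zero, smul_eq_mul]
  ring

lemma helmholtz_background (g h : ℝ) {θ : ℝ} (hθ : sin θ ≠ 0) (φ : ℝ) :
    lapEval θ φ (background g h) + 6 * sphEval θ φ (background g h) = 4 * g * cos θ := by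
  simp only [background, zonalPart, map_sub, map_add, map_smul, sphEval_monomial,
    lapEval_monomial _ _ hθ, smul_eq_mul]
  norm_num
  ring

lemma helmholtz_monomial_zero_one {θ : ℝ} (hθ : sin θ ≠ 0) (φ : ℝ) :
    lapEval θ φ (monomial 0 1) + 6 * sphEval θ φ (monomial 0 1) = 0 := by
  rw [sphEval_monomial, lapEval_monomial _ _ hθ]
  norm_num

variable (g h : ℝ) {ε : ℝ} (hε : |ε| ≤ 1) (W : PowerSeriesAlg)

lemma scale_monomial (j k : ℕ) : scale ε hε (monomial j k) = ε ^ k • monomial j k := by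
  rw [monomial, map_smul, scale_basisVec, smul_comm]

lemma scale_leadingOrder_add_smul :
    scale ε hε (leadingOrder g h + ε • W) = perturbed g h hε W + h • monomial 0 0 := by
  simp only [leadingOrder, zonalPart, perturbed, background, map_add, map_smul, scale_monomial]
  module

lemma sphEval_scale_polyEval (p : ℝ[X]) (θ φ : ℝ) :
    sphEval θ φ (scale ε hε (polyEval p (leadingOrder g h + ε • W))) =
      p.eval (toSphere (perturbed g h hε W) θ φ + h) := by
  rw [(isEndomorphism_scale hε).map_polyEval, (isCharacter_sphEval θ φ).map_polyEval,
    scale_leadingOrder_add_smul, map_add, map_smul, sphEval_monomial, toSphere]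
  simp

lemma lapS_perturbed {W : PowerSeriesAlg} {p : ℝ[X]}
    (hW : IsHelmholtzSolution ε W (polyEval p (leadingOrder g h + ε • W))) {θ : ℝ}
    (hθ : sin θ ≠ 0) (φ : ℝ) :
    lapS (toSphere (perturbed g h hε W)) θ φ - 4 * g * cos θ =
      (-6 * X + ε • p.comp (X + C h)).eval (toSphere (perturbed g h hε W) θ φ) := by
  have hwave := helmholtz_monomial_zero_one hθ φ
  have hzonal := helmholtz_background g h hθ φ
  have hcorr := hW.helmholtz_scale hε hθ φ
  rw [sphEval_scale_polyEval] at hcorr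
  have hsum : toSphere (perturbed g h hε W) θ φ = sphEval θ φ (background g h) +
      ε * (sphEval θ φ (monomial 0 1) + sphEval θ φ (scale ε hε W)) := by
    simp only [toSphere, perturbed, map_add, map_smul, smul_eq_mul]
  have heval : (-6 * X + ε • p.comp (X + C h)).eval (toSphere (perturbed g h hε W) θ φ) =
      -6 * toSphere (perturbed g h hε W) θ φ +
        ε * p.eval (toSphere (perturbed g h hε W) θ φ + h) := by
    simp
  rw [heval, ← hcorr, hsum, lapS_toSphere]
  simp only [perturbed, map_add, map_smul, smul_eq_mul]
  linear_combination hzonal + ε * hwave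

lemma norm_background_sub_perturbed_le :
    ‖background g h - perturbed g h hε W‖ ≤ |ε| * (64 + ‖W‖) := by
  have hscale : ‖scale ε hε W‖ ≤ ‖W‖ := by
    simpa using (scale ε hε).le_of_opNorm_le (norm_scale_le hε) W
  rw [perturbed, sub_add_cancel_left, norm_neg, norm_smul, Real.norm_eq_abs]
  gcongr
  calc ‖monomial 0 1 + scale ε hε W‖ ≤ ‖monomial 0 1‖ + ‖scale ε hε W‖ := norm_add_le _ _
    _ ≤ 64 + ‖W‖ := by
      rw [norm_monomial]
      norm_num [hscale]

lemma coeffCLM_two_perturbed {n : ℕ} (hn : 2 < n) :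
    coeffCLM n 2 (perturbed g h hε W) = ε * coeffCLM n 2 (scale ε hε W) := by
  simp only [perturbed, background, zonalPart, monomial, map_add, map_sub, map_smul,
    coeffCLM_two_basisVec_zero, coeffCLM_basisVec_eq_zero 2 (show 0 + 2 * 1 < n from hn),
    smul_eq_mul, mul_zero, add_zero, sub_zero, zero_add]

lemma abs_coeff_perturbed_sub_le {n : ℕ} (hn : 2 < n) {W₀ : PowerSeriesAlg} {K : ℝ}
    (hW : ‖W - W₀‖ ≤ K * |ε|) :
    |coeff (toSphere (perturbed g h hε W)) n 2 - linearCoeff n W₀ * ε ^ 2| ≤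
      (‖coeffCLM n 2‖ * ‖W‖ + ‖linearCoeff n‖ * K) * |ε| ^ 3 := by
  have hsplit : ε * coeffCLM n 2 (scale ε hε W) - linearCoeff n W₀ * ε ^ 2 =
      ε * (coeffCLM n 2 (scale ε hε W) - ε * linearCoeff n W) +
        linearCoeff n (W - W₀) * ε ^ 2 := by
    rw [map_sub]
    ring
  have hquadratic := abs_coeffCLM_two_scale_sub_le n hε W
  have hlinear := (linearCoeff n).le_of_opNorm_le_of_le le_rfl hW
  rw [Real.norm_eq_abs] at hlinear
  rw [coeff_toSphere, coeffCLM_two_perturbed g h hε W hn, hsplit]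
  calc |ε * (coeffCLM n 2 (scale ε hε W) - ε * linearCoeff n W) + linearCoeff n (W - W₀) * ε ^ 2|
      ≤ |ε| * |coeffCLM n 2 (scale ε hε W) - ε * linearCoeff n W| +
          |linearCoeff n (W - W₀)| * ε ^ 2 := by
        rw [← abs_mul, ← abs_of_nonneg (sq_nonneg ε), ← abs_mul, abs_of_nonneg (sq_nonneg ε)]
        exact abs_add_le _ _
    _ ≤ |ε| * (‖coeffCLM n 2‖ * ‖W‖ * ε ^ 2) + ‖linearCoeff n‖ * (K * |ε|) * ε ^ 2 := by gcongr
    _ = (‖coeffCLM n 2‖ * ‖W‖ + ‖linearCoeff n‖ * K) * |ε| ^ 3 := by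
        rw [← sq_abs]
        ring

lemma moment_C_mul (k : ℕ) (c : ℝ) (q : ℝ[X]) (a : PowerSeriesAlg) :
    moment k (C c * q) a = c * moment k q a := by
  rw [moment_apply, moment_apply, ← intervalIntegral.integral_const_mul]
  refine intervalIntegral.integral_congr fun θ _ => ?_
  simp only [eval_mul, eval_C]
  ring

lemma mul_linearCoeff_diagInv_resolvent {n : ℕ} {A c : ℝ} {q : ℝ[X]}
    (hq : rodrigues n (n + 2) = C A * q) (hgeg : gegenbauer 2 q = C c * q) (hc : c ≠ 0)
    (y : PowerSeriesAlg) :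
    c * linearCoeff n (diagInv (resolvent 0 y)) = π * normConst n 2 * A * moment 1 q y := by
  rw [← mul_moment_diagInv_resolvent hgeg hc, linearCoeff, smul_apply, hq, moment_C_mul,
    smul_eq_mul]
  ring

lemma gegenbauer_two_four : gegenbauer 2 (7 * X ^ 2 - 1) = C (-14) * (7 * X ^ 2 - 1) := by
  refine Polynomial.funext fun x => ?_
  simp [gegenbauer]
  ring

lemma gegenbauer_two_six :
    gegenbauer 2 (33 * X ^ 4 - 18 * X ^ 2 + 1) = C (-36) * (33 * X ^ 4 - 18 * X ^ 2 + 1) := by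
  refine Polynomial.funext fun x => ?_
  simp [gegenbauer]
  ring

variable {g h}

lemma exists_polynomial_linearCoeff (hgh : g ≠ 0 ∨ h ≠ 0) (τ₄ : ℝ) {τ₆ : ℝ}
    (hτ₆ : h = 0 → τ₆ = 0) :
    ∃ G : ℝ[X], resonance (polyEval G (leadingOrder g h)) = 0 ∧
      linearCoeff 4 (diagInv (resolvent 0 (polyEval G (leadingOrder g h)))) = τ₄ ∧
      linearCoeff 6 (diagInv (resolvent 0 (polyEval G (leadingOrder g h)))) = τ₆ := by
  have hN₄ := normConst_pos 4 2
  have hN₆ := normConst_pos 6 2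
  obtain ⟨G, hG₀, hG₄, hG₆⟩ := exists_polynomial_resonance hgh 0
    (-14 * τ₄ / (π * normConst 4 2 * 2880)) (s₆ := -36 * τ₆ / (π * normConst 6 2 * 604800))
    fun hh => by rw [hτ₆ hh, mul_zero, zero_div]
  have h₄ := mul_linearCoeff_diagInv_resolvent rodrigues_four_six gegenbauer_two_four (by norm_num)
    (polyEval G (leadingOrder g h))
  have h₆ := mul_linearCoeff_diagInv_resolvent rodrigues_six_eight gegenbauer_two_six (by norm_num)
    (polyEval G (leadingOrder g h))
  rw [hG₄, mul_div_cancel₀ _ (by positivity)] at h₄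
  rw [hG₆, mul_div_cancel₀ _ (by positivity)] at h₆
  exact ⟨G, hG₀, by linarith, by linarith⟩

lemma exists_solution_curve (hgh : g ≠ 0 ∨ h ≠ 0) (τ₄ : ℝ) {τ₆ : ℝ} (hτ₆ : h = 0 → τ₆ = 0) :
    ∃ (W₀ : PowerSeriesAlg) (K δ : ℝ), linearCoeff 4 W₀ = τ₄ ∧ linearCoeff 6 W₀ = τ₆ ∧
      0 ≤ K ∧ 0 < δ ∧ ∀ ε : ℝ, |ε| ≤ δ → ∃ (W : PowerSeriesAlg) (p : ℝ[X]),
        ‖W - W₀‖ ≤ K * |ε| ∧ IsHelmholtzSolution ε W (polyEval p (leadingOrder g h + ε • W)) := by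
  obtain ⟨G, hG, hG₄, hG₆⟩ := exists_polynomial_linearCoeff hgh τ₄ hτ₆
  obtain ⟨g₁, hg₁, -⟩ := exists_polynomial_resonance hgh (1, 0) 0 (s₆ := 0) fun _ => rfl
  obtain ⟨g₂, hg₂, -⟩ := exists_polynomial_resonance hgh (0, 1) 0 (s₆ := 0) fun _ => rfl
  obtain ⟨W, p, hO, hW⟩ := exists_branch hG hg₁ hg₂
  obtain ⟨K, hK, hbound⟩ := hO.exists_nonneg
  obtain ⟨δ, hδ, hnear⟩ := Metric.nhds_basis_closedBall.eventually_iff.1 (hbound.bound.and hW)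
  refine ⟨_, K, δ, hG₄, hG₆, hK, hδ, fun ε hε => ⟨W ε, p ε, hnear ?_⟩⟩
  rwa [mem_closedBall_zero_iff]

lemma exists_steady_perturbation (hgh : g ≠ 0 ∨ h ≠ 0) (τ₄ : ℝ) {τ₆ : ℝ}
    (hτ₆ : h = 0 → τ₆ = 0) :
    ∃ (M δ : ℝ), 0 < M ∧ 0 < δ ∧ ∀ ε : ℝ, |ε| ≤ δ → ∃ (a : PowerSeriesAlg) (F : ℝ[X]),
      (∀ θ, sin θ ≠ 0 → ∀ φ,
        lapS (toSphere a) θ φ - 4 * g * cos θ = F.eval (toSphere a θ φ)) ∧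
      ‖background g h - a‖ ≤ M * |ε| ∧
      |coeff (toSphere a) 4 2 - τ₄ * ε ^ 2| ≤ M * |ε| ^ 3 ∧
      |coeff (toSphere a) 6 2 - τ₆ * ε ^ 2| ≤ M * |ε| ^ 3 := by
  obtain ⟨W₀, K, δ, rfl, rfl, hK, hδ, hcurve⟩ := exists_solution_curve hgh τ₄ hτ₆
  let R := ‖W₀‖ + K
  let L (n : ℕ) := ‖coeffCLM n 2‖ * R + ‖linearCoeff n‖ * K
  have hR : 0 ≤ R := by positivity
  have hL (n : ℕ) : 0 ≤ L n := by positivity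
  refine ⟨64 + R + L 4 + L 6, min δ 1, by linarith [hL 4, hL 6], by positivity, fun ε hε => ?_⟩
  have hε₁ : |ε| ≤ 1 := hε.trans (min_le_right _ _)
  obtain ⟨W, p, hWW₀, hW⟩ := hcurve ε (hε.trans (min_le_left _ _))
  have hWR : ‖W‖ ≤ R := (norm_le_norm_add_norm_sub' W W₀).trans <|
    add_le_add_right (hWW₀.trans (mul_le_of_le_one_right hK hε₁)) _
  have hcoeff {n : ℕ} (hn : 2 < n) (hLn : L n ≤ 64 + R + L 4 + L 6) :
      |coeff (toSphere (perturbed g h hε₁ W)) n 2 - linearCoeff n W₀ * ε ^ 2| ≤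
        (64 + R + L 4 + L 6) * |ε| ^ 3 := by
    refine (abs_coeff_perturbed_sub_le g h hε₁ W hn hWW₀).trans
      (mul_le_mul_of_nonneg_right (le_trans ?_ hLn) (by positivity))
    exact add_le_add_left (mul_le_mul_of_nonneg_left hWR (norm_nonneg _)) _
  refine ⟨perturbed g h hε₁ W, _, fun θ hθ φ => lapS_perturbed g h hε₁ hW hθ φ, ?_,
    hcoeff (by norm_num) (by linarith [hL 6]), hcoeff (by norm_num) (by linarith [hL 4])⟩
  refine (norm_background_sub_perturbed_le g h hε₁ W).trans ?_
  rw [mul_comm]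
  exact mul_le_mul_of_nonneg_right (by linarith [hL 4, hL 6]) (abs_nonneg ε)

end RossbyHaurwitz

open RossbyHaurwitz in
theorem H2_existence_near_RossbyHaurwitz_general (k : ℕ) {β γ : ℝ} (hβγ : β ≠ 0 ∨ γ ≠ 0)
    (τ₄ : ℝ) {τ₆ : ℝ} (hτ₆ : β = 0 → τ₆ = 0) :
    ∃ (M ε₀ : ℝ), 0 < M ∧ 0 < ε₀ ∧ ∀ ε : ℝ, |ε| ≤ ε₀ →
      ∃ (Ψ : SphereFun) (F : Polynomial ℝ),
        SphSmooth Ψ ∧ PeriodicPhi Ψ ∧ sobNormSq k Ψ < ⊤ ∧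
        (∀ θ ∈ Set.Ioo (0 : ℝ) Real.pi, ∀ φ : ℝ,
          lapS Ψ θ φ - 4 * γ * Ynm 1 0 θ φ = F.eval (Ψ θ φ)) ∧
        sobNormSq k (fun θ φ => β * Ynm 2 0 θ φ + γ * Ynm 1 0 θ φ - Ψ θ φ) ≤
          ENNReal.ofReal ((M * |ε|) ^ 2) ∧
        |coeff Ψ 4 2 - τ₄ * ε ^ 2| ≤ M * |ε| ^ 3 ∧ |coeff Ψ 6 2 - τ₆ * ε ^ 2| ≤ M * |ε| ^ 3 := by
  have h₃ : √(3 / (4 * Real.pi)) ≠ 0 := by positivity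
  have h₅ : √(5 / (4 * Real.pi)) ≠ 0 := by positivity
  set g := γ * √(3 / (4 * Real.pi)) with hg
  set h := β * √(5 / (4 * Real.pi)) / 2 with hh
  have hβ : h = 0 ↔ β = 0 := by
    simp only [hh, div_eq_zero_iff, mul_eq_zero, h₅, or_false, two_ne_zero]
  have hγ : g = 0 ↔ γ = 0 := by simp only [hg, mul_eq_zero, h₃, or_false]
  obtain ⟨M, ε₀, hM, hε₀, hcurve⟩ := exists_steady_perturbation (g := g) (h := h)
    (by rw [Ne, Ne, hβ, hγ]; exact hβγ.symm) τ₄ fun h₀ => hτ₆ (hβ.1 h₀)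
  obtain ⟨C, hC, hsob⟩ := exists_sobNormSq_toSphere_le k
  refine ⟨(1 + C) * M, ε₀, by positivity, hε₀, fun ε hε => ?_⟩
  obtain ⟨a, F, hsteady, hclose, h₄, h₆⟩ := hcurve ε hε
  have hMC : M * |ε| ^ 3 ≤ (1 + C) * M * |ε| ^ 3 := by
    gcongr
    exact le_mul_of_one_le_left hM.le (by linarith)
  have hdiff : (fun θ φ => β * Ynm 2 0 θ φ + γ * Ynm 1 0 θ φ - toSphere a θ φ) =
      toSphere (background g h - a) := by
    ext θ φ
    rw [← congrFun₂ (toSphere_background β γ) θ φ]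
    exact (map_sub (sphEval θ φ) _ _).symm
  refine ⟨toSphere a, F, sphSmooth_toSphere a, periodicPhi_toSphere a,
    (hsob a).trans_lt ENNReal.ofReal_lt_top, fun θ hθ φ => ?_, ?_, h₄.trans hMC, h₆.trans hMC⟩
  · rw [← hsteady θ (Real.sin_pos_of_pos_of_lt_pi hθ.1 hθ.2).ne', Ynm_one_zero, hg]
    ring
  · rw [hdiff]
    refine (hsob _).trans (ENNReal.ofReal_le_ofReal (pow_le_pow_left₀ (by positivity) ?_ 2))
    rw [mul_assoc]
    gcongr
    linarith

/-- (`H²` existence theorem.) For `β² + γ² > 0` there exist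
`c_{γ,β} > 0`, `M > 0` and `ε₀ > 0` such that for every `0 < ε ≤ ε₀` there are
`Ψ_ε ∈ H²(S²)` and `F_ε : ℝ → ℝ` with `ΔΨ_ε − 4γY₁⁰ = F_ε(Ψ_ε)`,
`‖βY₂⁰ + γY₁⁰ − Ψ_ε‖_{H²} ≤ Mε`, and the stated second-order expansions of the
coefficients `⟨Ψ_ε, Y₆²⟩` and `⟨Ψ_ε, Y₄²⟩`. -/
theorem H2_existence_near_RossbyHaurwitz (β γ : ℝ) (hβγ : 0 < β^2 + γ^2) :
    ∃ (cgb M ε₀ : ℝ), 0 < cgb ∧ 0 < M ∧ 0 < ε₀ ∧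
      ∀ ε : ℝ, 0 < ε → ε ≤ ε₀ →
        ∃ (Ψ : SphereFun) (F : ℝ → ℝ),
          SphSmooth Ψ ∧ PeriodicPhi Ψ ∧
          sobNormSq 2 Ψ < ⊤ ∧
          (∀ θ ∈ Set.Ioo (0:ℝ) Real.pi, ∀ φ : ℝ,
            lapS Ψ θ φ - 4*γ*Ynm 1 0 θ φ = F (Ψ θ φ)) ∧
          sobNormSq 2 (fun θ φ => β*Ynm 2 0 θ φ + γ*Ynm 1 0 θ φ - Ψ θ φ)
            ≤ ENNReal.ofReal ((M*ε)^2) ∧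
          |coeff Ψ 6 2 + β^2 * (1/36) * (45/(11*Real.pi*Real.sqrt 182)) * cgb * ε^2|
            ≤ M*ε^3 ∧
          |coeff Ψ 4 2 + (1/14) * ((3*Real.sqrt 3/(154*Real.pi))*(11*γ^2 - 5*β^2)
              - β^2 * (1/(7*Real.pi)) * (30*γ^2/(7*γ^2+15*β^2))) * cgb * ε^2|
            ≤ M*ε^3 := by
  have hne : β ≠ 0 ∨ γ ≠ 0 := by
    by_contra! h
    simp [h.1, h.2] at hβγ
  obtain ⟨M, ε₀, hM, hε₀, hΨ⟩ := H2_existence_near_RossbyHaurwitz_general 2 hne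
    (-((1/14) * ((3*Real.sqrt 3/(154*Real.pi))*(11*γ^2 - 5*β^2)
      - β^2 * (1/(7*Real.pi)) * (30*γ^2/(7*γ^2+15*β^2)))))
    (τ₆ := -(β^2 * (1/36) * (45/(11*Real.pi*Real.sqrt 182)))) (by rintro rfl; simp)
  refine ⟨1, M, ε₀, one_pos, hM, hε₀, fun ε hε hle => ?_⟩
  obtain ⟨Ψ, F, hsmooth, hper, hsob, hsteady, hclose, h₄, h₆⟩ := hΨ ε (by rwa [abs_of_pos hε])
  rw [neg_mul, sub_neg_eq_add, abs_of_pos hε] at h₄ h₆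
  rw [abs_of_pos hε] at hclose
  simp only [mul_one]
  exact ⟨Ψ, F.eval, hsmooth, hper, hsob, hsteady, hclose, h₆, h₄⟩
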